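/- Let m ≥ 2 be an integer and let M, N be coprime integers with N odd and positive, so that ζ = e^{2πiM/N} is a primitive odd Nth root of unity. Then lim_{t→0⁺} ((2m−1)/2)·e^{(2πiM/N − t)(2m−3)²/(8(2m−1))}·P_m(e^{2πiM/N − t}) = e^{2πiM(2m−3)²/(8(2m−1)N)}·Z_{m,N}(ζ). -/

import Mathlib

open Finset

/-- The q-Pochhammer symbol `(x;q)_n = ∏_{j=0}^{n-1} (1 - x q^j)`. -/
noncomputable def qPoch (x q : ℂ) (n : ℕ) : ℂ := ∏ j ∈ Finset.range n, (1 - x * q ^ j)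

/-- The Gaussian binomial coefficient `[n choose k]_q`. -/
noncomputable def qBinom (q : ℂ) (n k : ℕ) : ℂ :=
  if k ≤ n then qPoch q q n / (qPoch q q (n - k) * qPoch q q k) else 0

/-- Extend a tuple `g : Fin k → ℕ` to `ℕ → ℕ` by zero. -/
def pad (k : ℕ) (g : Fin k → ℕ) : ℕ → ℕ := fun j => if h : j < k then g ⟨j, h⟩ else 0

/-- The general term of the multi-sum `P_m(q)`: here `n j` denotes `n_{j+1}` (0-based indexing),
so `n (m-2)` is `n_{m-1}` and `n 0` is `n_1`. -/
noncomputable def Pterm (m : ℕ) (q : ℂ) (n : ℕ → ℕ) : ℂ :=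
  (-1) ^ (n (m - 2)) *
    q ^ (n (m - 2) * (n (m - 2) + 1) / 2 + ∑ j ∈ Finset.range (m - 2), ((n j) ^ 2 + n j)) /
    qPoch (-q) q (n 0) *
    ∏ i ∈ Finset.range (m - 2), qBinom q (n (i + 1)) (n i)

/-- The multi-sum `P_m(q)`. -/
noncomputable def P (m : ℕ) (q : ℂ) : ℂ := ∑' n : Fin (m - 1) → ℕ, Pterm m q (pad (m - 1) n)

/-- The truncated multi-sum `Z_{m,N}(q)`. -/
noncomputable def Z (m N : ℕ) (q : ℂ) : ℂ :=
  ∑ n ∈ Fintype.piFinset (fun _ : Fin (m - 1) => Finset.range N), Pterm m q (pad (m - 1) n)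

/-- The odd periodic function `χ_{4m-2}`. -/
def chiP (m : ℕ) (k : ℤ) : ℤ :=
  if k % (4 * m - 2) = (2 * (m : ℤ) - 3) % (4 * m - 2) then 1
  else if k % (4 * m - 2) = (2 * (m : ℤ) + 1) % (4 * m - 2) then -1
  else 0


lemma qPoch_zero (x q : ℂ) : qPoch x q 0 = 1 := by simp [qPoch]

lemma qPoch_succ (x q : ℂ) (n : ℕ) : qPoch x q (n+1) = qPoch x q n * (1 - x * q^n) := by
  simp [qPoch, Finset.prod_range_succ]

lemma qPoch_succ' (x q : ℂ) (n : ℕ) : qPoch x q (n+1) = (1 - x) * qPoch (x*q) q n := by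
  simp only [qPoch, Finset.prod_range_succ']
  rw [mul_comm]
  congr 1
  · simp
  · refine Finset.prod_congr rfl fun j _ => ?_
    ring

lemma qPoch_add (x q : ℂ) (n k : ℕ) : qPoch x q (n+k) = qPoch x q n * qPoch (x*q^n) q k := by
  simp only [qPoch, Finset.prod_range_add]
  congr 1
  refine Finset.prod_congr rfl fun j _ => ?_
  ring

lemma qPoch_ne {x q : ℂ} {n : ℕ} (h : ∀ j < n, 1 - x * q^j ≠ 0) : qPoch x q n ≠ 0 := by
  unfold qPoch
  refine Finset.prod_ne_zero_iff.mpr fun j hj => h j (Finset.mem_range.mp hj)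

lemma qBinom_zero (q : ℂ) (n : ℕ) (h : qPoch q q n ≠ 0) : qBinom q n 0 = 1 := by
  simp [qBinom, qPoch_zero, h]

lemma qBinom_gt (q : ℂ) {n k : ℕ} (h : n < k) : qBinom q n k = 0 := by
  simp [qBinom, h]

lemma qBinom_pascal (q : ℂ) (M j : ℕ) (hj : j ≤ M) (h : ∀ i ≤ M+1, qPoch q q i ≠ 0) :
    qBinom q (M+1) (j+1) = qBinom q M (j+1) + q^(M-j) * qBinom q M j := by
  obtain ⟨d, rfl⟩ := Nat.exists_eq_add_of_le hj
  rcases d with _ | d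
  · have h1 := h j (by omega)
    have h2 := h (j+1) (by omega)
    simp [qBinom, qPoch_zero, h1, h2]
  · have e1 : j + (d+1) + 1 - (j+1) = d + 1 := by omega
    have e2 : j + (d+1) - (j+1) = d := by omega
    have e3 : j + (d+1) - j = d+1 := by omega
    have i1 : j + 1 ≤ j + (d+1) + 1 := by omega
    have i2 : j + 1 ≤ j + (d+1) := by omega
    have i3 : j ≤ j + (d+1) := by omega
    simp only [qBinom, e1, e2, e3, i1, i2, i3, if_true]
    have h1 := h j (by omega)
    have h2 := h d (by omega)
    have h3 : qPoch q q (j+1) ≠ 0 := h (j+1) (by omega)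
    have h4 : qPoch q q (d+1) ≠ 0 := h (d+1) (by omega)
    rw [qPoch_succ q q (j+(d+1))]
    rw [qPoch_succ] at h3 h4
    rw [qPoch_succ q q j, qPoch_succ q q d]
    have h3' := right_ne_zero_of_mul h3
    have h4' := right_ne_zero_of_mul h4
    field_simp
    ring

lemma vand (q : ℂ) (M : ℕ) (h : ∀ i ≤ M, qPoch q q i ≠ 0) (a : ℂ)
    (ha : ∀ j : ℕ, 1 - a * q^(j+1) ≠ 0) :
    ∑ j ∈ Finset.range (M+1), qBinom q M j * (a^j * q^(j^2) / qPoch (a*q) q j)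
      = 1 / qPoch (a*q) q M := by
  induction M generalizing a with
  | zero => simp [qBinom, qPoch_zero]
  | succ M ih =>
    have ih1 := ih (fun i hi => h i (by omega)) a ha
    have ih2 := ih (fun i hi => h i (by omega)) (a*q) (fun j => by
      have := ha (j+1); rwa [show a * q * q^(j+1) = a * q^(j+1+1) by ring])
    have hp : ∀ n, qPoch (a*q) q n ≠ 0 := fun n => qPoch_ne (fun j _ => by
      have := ha j; rwa [show a * q * q^j = a * q^(j+1) by ring])
    have hp2 : ∀ n, qPoch (a*q*q) q n ≠ 0 := fun n => qPoch_ne (fun j _ => by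
      have := ha (j+1); rwa [show a * q * q * q^j = a * q^(j+1+1) by ring])
    have h0 : 1 - a * q ≠ 0 := by simpa using ha 0
    rw [Finset.sum_range_succ', Finset.sum_congr rfl (g := fun j =>
      qBinom q M (j+1) * (a^(j+1) * q^((j+1)^2) / qPoch (a*q) q (j+1)) +
      (a * q^(M+1) / (1 - a*q)) * (qBinom q M j * ((a*q)^j * q^(j^2) / qPoch (a*q*q) q j)))]
    · rw [Finset.sum_add_distrib, ← Finset.mul_sum, ih2]
      have e : ∑ j ∈ Finset.range (M+1), qBinom q M (j+1) * (a^(j+1) * q^((j+1)^2) / qPoch (a*q) q (j+1)) + 1 = 1 / qPoch (a*q) q M := by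
        rw [Finset.sum_range_succ', qBinom_zero q M (h M (by omega))] at ih1
        rw [Finset.sum_range_succ, qBinom_gt q (by omega : M < M+1), ← ih1]
        simp [qPoch_zero]
      rw [qBinom_zero q _ (h _ le_rfl)]
      have e2 := qPoch_succ' (a*q) q M
      have e3 := qPoch_succ (a*q) q M
      have := hp (M+1)
      have := hp M
      have := hp2 M
      have e4 : qPoch (a*q*q) q M = qPoch (a*q) q M * (1 - a*q*q^M) / (1 - a*q) := by
        rw [← e3, e2, mul_div_cancel_left₀ _ h0]
      have e5 : 1 - a*q*q^M ≠ 0 := by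
        have := ha M; rwa [show a * q * q^M = a * q^(M+1) by ring]
      simp only [pow_zero, qPoch_zero]
      have : (0:ℕ)^2 = 0 := rfl
      rw [this]
      rw [show ∀ x y : ℂ, x + y + 1 * (1 * q^0 / 1) = (x + 1) + y by intros; ring, e, e4, e3]
      field_simp
      ring
    · intro j hj
      have hj' : j ≤ M := by simpa [Nat.lt_succ_iff] using hj
      rw [qBinom_pascal q M j hj' h, add_mul]
      congr 1
      rw [qPoch_succ']
      have := hp2 j
      obtain ⟨d, rfl⟩ := Nat.exists_eq_add_of_le hj'
      rw [Nat.add_sub_cancel_left]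
      field_simp
      ring

/-- triangular number -/
def tri (n : ℕ) : ℕ := n * (n+1) / 2

lemma two_tri (n : ℕ) : 2 * tri n = n * (n+1) := by
  unfold tri
  exact Nat.mul_div_cancel' (Nat.even_mul_succ_self n).two_dvd

lemma tri_succ (n : ℕ) : tri (n+1) = tri n + (n+1) := by
  have h1 := two_tri n
  have h2 := two_tri (n+1)
  nlinarith

/-- conjugate summand -/
noncomputable def vv (q b : ℂ) (r j : ℕ) : ℂ :=
  (-1)^(r+j) * b^(r+j) * q^(tri (r+j)) * qPoch (q^(j+1)) q r / qPoch (b*q) q (2*r+j+1)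

lemma vv_rec (q b : ℂ) (hb : ∀ j : ℕ, 1 - b * q^(j+1) ≠ 0) (r L : ℕ) :
    (1 - b*q^(r+1)) * ∑ j ∈ Finset.range L, vv q b (r+1) j
      + b * q^(r+1) * (1 - q^(r+1)) * ∑ j ∈ Finset.range (L+1), vv q b r j
      = -(1 - b*q^(2*r+2)) * (1 - q^(L+1)) * vv q b r (L+1) := by
  have hp : ∀ n, qPoch (b*q) q n ≠ 0 := fun n => qPoch_ne (fun j _ => by
      have := hb j; rwa [show b * q * q^j = b * q^(j+1) by ring])
  induction L with
  | zero =>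
    simp only [Finset.range_zero, Finset.sum_empty, Finset.range_one, Finset.sum_singleton,
      vv, zero_add]
    have e1 : tri (r+1) = tri r + (r+1) := tri_succ r
    have e2 : (1-q) * qPoch (q^(1+1)) q r = qPoch q q r * (1 - q^(r+1)) := by
      have a1 := qPoch_succ q q r
      have a2 := qPoch_succ' q q r
      rw [show q^(1+1) = q*q by ring, ← a2, a1]; ring
    have e3 := qPoch_succ (b*q) q (2*r+1)
    have := hp (2*r+1)
    have h3 : 1 - b*q*q^(2*r+1) ≠ 0 := by
      have := hb (2*r+1); rwa [show b * q * q^(2*r+1) = b * q^(2*r+1+1) by ring]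
    have e4 : 1 - b*q^(2*r+2) = 1 - b*q*q^(2*r+1) := by ring
    rw [show 2*r+0+1 = 2*r+1 by ring, e1, e3, e4]
    generalize 1 - b*q*q^(2*r+1) = X at *
    field_simp
    simp only [add_zero]
    linear_combination (-1)^r * b^r * q^(tri r) * b * q^(r+1) * (-1) * e2
  | succ L ih =>
    rw [Finset.sum_range_succ, Finset.sum_range_succ _ (L+1), mul_add, mul_add]
    rw [show ∀ x y z w : ℂ, x + y + (z + w) = (x + z) + (y + w) by intros; ring, ih]
    simp only [vv]
    have e1 : tri (r+(L+1+1)) = tri (r+(L+1)) + (r+L+2) := by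
      rw [← add_assoc r (L+1) 1, tri_succ]; ring
    have e2 : (1-q^(L+2)) * qPoch (q^(L+1+1+1)) q r = qPoch (q^(L+1+1)) q r * (1 - q^(L+r+2)) := by
      have a1 := qPoch_succ (q^(L+2)) q r
      have a2 := qPoch_succ' (q^(L+2)) q r
      rw [show q^(L+1+1+1) = q^(L+2)*q by ring, ← a2, a1]; ring
    have e3 : qPoch (q^(L+1)) q (r+1) = (1 - q^(L+1)) * qPoch (q^(L+1+1)) q r := by
      rw [qPoch_succ', pow_succ q (L+1)]
    have e4 := qPoch_succ (b*q) q (2*r+(L+1)+1)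
    have := hp (2*r+(L+1)+1)
    have h3 : 1 - b*q*q^(2*r+(L+1)+1) ≠ 0 := by
      have := hb (2*r+(L+1)+1); rwa [show b * q * q^(2*r+(L+1)+1) = b * q^(2*r+(L+1)+1+1) by ring]
    rw [show 2*(r+1)+L+1 = 2*r+(L+1)+1+1 by ring, show 2*r+(L+1+1)+1 = 2*r+(L+1)+1+1 by ring, 
      show r+1+L = r+(L+1) by ring, e1, e3, e4]
    have hX : (1 - b*q*q^(2*r+(L+1)+1)) = 1 - b*(q^r)^2*q^L*q^3 := by ring
    rw [hX] at h3 ⊢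
    have e2' : (1-q^L*q^2) * qPoch (q^(L+1+1+1)) q r
        = qPoch (q^(L+1+1)) q r * (1 - q^L*q^r*q^2) := by
      rw [show q^L*q^2 = q^(L+2) by ring, e2]; ring
    rw [show q^(r+1) = q^r*q by ring, show q^(2*r+2) = (q^r)^2*q^2 by ring,
      show (1 - q^(L+1+1)) = (1-q^L*q^2) by ring, show (1 - q^(L+1)) = (1-q^L*q) by ring,
      pow_add q (tri (r+(L+1))), show q^(r+L+2) = q^r*q^L*q^2 by ring,
      show b^(r+(L+1+1)) = b^(r+(L+1))*b by ring,
      show (-1:ℂ)^(r+(L+1+1)) = (-1)^(r+(L+1))*(-1) by ring]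
    generalize q^r = x at *
    generalize q^L = y at *
    generalize (-1:ℂ)^(r+(L+1)) = s at *
    generalize b^(r+(L+1)) = B at *
    generalize q^(tri (r+(L+1))) = T at *
    generalize qPoch (q^(L+1+1+1)) q r = p2 at *
    generalize qPoch (q^(L+1+1)) q r = p at *
    generalize qPoch (b*q) q (2*r+(L+1)+1) = D at *
    have key : ∀ Y : ℂ, Y = 1 - b*x^2*y*q^3 → Y ≠ 0 →
      -(1 - b * (x^2*q^2)) * (1 - y*q) * (s * B * T * p / D) +
      ((1 - b * (x*q)) * (s * B * T * ((1 - y*q) * p) / (D * Y)) +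
        b * (x*q) * (1 - x*q) * (s * B * T * p / D)) =
      -(1 - b * (x^2*q^2)) * (1 - y*q^2) * (s * (-1) * (B * b) * (T * (x*y*q^2)) * p2 / (D * Y)) := by
      intro Y hY hY0
      field_simp
      subst hY
      linear_combination (-s) * B * T * (1 - b*(x^2*q^2)) * (b * (x*y*q^2)) * e2'
    exact key _ rfl h3

/-- Bailey-pair alpha -/
noncomputable def al (q b : ℂ) (l r : ℕ) : ℂ :=
  b^(l*r) * q^(l*(r^2+r)) * ((-1)^r * q^(r^2) * (1 - b*q^(2*r+1)) *
    qPoch (b*q) q r * qPoch (-(b*q)) q r / (qPoch q q r * qPoch (-q) q r))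

/-- the inner sums -/
noncomputable def uu (q b : ℂ) : ℕ → ℕ → ℂ
  | 0, n => 1 / qPoch (-q) q n
  | l+1, n => ∑ r ∈ Finset.range (n+1), b^r * q^(r^2+r) * qBinom q n r * uu q b l r

lemma base_tele (q b : ℂ) (hb : ∀ j : ℕ, 1 - b * q^(j+1) ≠ 0) (hm : ∀ j : ℕ, 1 + q^(j+1) ≠ 0)
    (n : ℕ) (h : ∀ i ≤ n+1, qPoch q q i ≠ 0) (K : ℕ) (hK : K ≤ n+1) :
    ∑ r ∈ Finset.range K, ((1 - q^(2*n+2)) *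
        (al q b 0 r / (qPoch q q (n+1-r) * qPoch (b*q) q (n+1+r+1)))
        - al q b 0 r / (qPoch q q (n-r) * qPoch (b*q) q (n+r+1)))
      = -((-1)^K * q^(K^2) * q^(n+1-K) * (1 - q^(2*K)) * qPoch (b*q) q K * qPoch (-(b*q)) q K
          / (qPoch q q K * qPoch (-q) q K * qPoch q q (n+1-K) * qPoch (b*q) q (n+K+1))) := by
  have hp : ∀ n, qPoch (b*q) q n ≠ 0 := fun n => qPoch_ne (fun j _ => by
      have := hb j; rwa [show b * q * q^j = b * q^(j+1) by ring])
  have hpm : ∀ n, qPoch (-q) q n ≠ 0 := fun n => qPoch_ne (fun j _ => by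
      have := hm j; rwa [show 1 - -q * q^j = 1 + q^(j+1) by ring])
  induction K with
  | zero => simp
  | succ K ih =>
    rw [Finset.sum_range_succ, ih (by omega)]
    obtain ⟨d, rfl⟩ := Nat.exists_eq_add_of_le (show K ≤ n by omega)
    simp only [al, zero_mul, pow_zero, one_mul]
    rw [show K+d+1-K = d+1 by omega, show K+d-K = d by omega, show K+d+1-(K+1) = d by omega,
      show K+d+1+K+1 = K+d+K+1+1 by ring, show K+d+(K+1)+1 = K+d+K+1+1 by ring]
    have h1 := h K (by omega)
    have h2 := h (K+1) (by omega)
    have h3 := h d (by omega)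
    have h4 := h (d+1) (by omega)
    have h5 := hpm K
    have h6 := hpm (K+1)
    have h7 := hp (K+d+K+1)
    have h8 := hp (K+d+K+1+1)
    have h9 : 1 - b*q^(2*K+1) ≠ 0 := hb (2*K)
    rw [qPoch_succ] at h2 h4 h6 h8
    replace h2 := right_ne_zero_of_mul h2
    replace h4 := right_ne_zero_of_mul h4
    replace h6 := right_ne_zero_of_mul h6
    replace h8 := right_ne_zero_of_mul h8
    simp only [qPoch_succ q q, qPoch_succ (-q) q, qPoch_succ (b*q) q (K+d+K+1),
      qPoch_succ (b*q) q K, qPoch_succ (-(b*q)) q K]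
    have g1 : 1 - q*q^K = 1 - q^K*q := by ring
    have g2 : 1 - q*q^d = 1 - q^d*q := by ring
    have g3 : 1 - -q*q^K = 1 + q^K*q := by ring
    have g4 : 1 - b*q*q^(K+d+K+1) = 1 - b*((q^K)^2*q^d*q^2) := by ring
    have g5 : 1 - b*q^(2*K+1) = 1 - b*((q^K)^2*q) := by ring
    have g6 : 1 - b*q*q^K = 1 - b*(q^K*q) := by ring
    have g7 : 1 - -(b*q)*q^K = 1 + b*(q^K*q) := by ring
    have g8 : q^((K+1)^2) = q^(K^2)*((q^K)^2*q) := by ring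
    have g9 : q^(2*(K+1)) = (q^K)^2*q^2 := by ring
    have g10 : q^(2*(K+d)+2) = (q^K)^2*(q^d)^2*q^2 := by ring
    have g11 : q^(2*K) = (q^K)^2 := by ring
    have g12 : q^(d+1) = q^d*q := by ring
    rw [g1] at h2; rw [g2] at h4; rw [g3] at h6; rw [g4] at h8; rw [g5] at h9
    rw [g1, g2, g3, g4, g5, g6, g7, g8, g9, g10, g11, g12, pow_succ (-1:ℂ) K]
    generalize qPoch q q K = A1 at *
    generalize qPoch q q d = A2 at *
    generalize qPoch (-q) q K = A3 at *
    generalize qPoch (b*q) q (K+d+K+1) = A4 at *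
    generalize qPoch (b*q) q K = A5 at *
    generalize qPoch (-(b*q)) q K = A6 at *
    generalize q^(K^2) = A7 at *
    generalize (-1:ℂ)^K = A8 at *
    generalize q^K = x at *
    generalize q^d = z at *
    clear ih g1 g2 g3 g4 g5 g6 g7 g8 g9 g10 g11 g12
    have key : ∀ Y1 Y2 Y3 Y4 : ℂ, Y1 = 1 - x*q → Y2 = 1 - z*q → Y3 = 1 + x*q →
      Y4 = 1 - b*(x^2*z*q^2) → Y1 ≠ 0 → Y2 ≠ 0 → Y3 ≠ 0 → Y4 ≠ 0 →
      -(A8 * A7 * (z*q) * (1 - x^2) * A5 * A6 / (A1 * A3 * (A2 * Y2) * A4)) +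
      ((1 - x^2*z^2*q^2) * (A8 * A7 * (1 - b*(x^2*q)) * A5 * A6 / (A1 * A3) / (A2 * Y2 * (A4 * Y4)))
      - A8 * A7 * (1 - b*(x^2*q)) * A5 * A6 / (A1 * A3) / (A2 * A4)) =
      -(A8 * (-1) * (A7 * (x^2*q)) * z * (1 - x^2*q^2) * (A5 * (1 - b*(x*q))) * (A6 * (1 + b*(x*q))) /
        (A1 * Y1 * (A3 * Y3) * A2 * (A4 * Y4))) := by
      intro Y1 Y2 Y3 Y4 e1 e2 e3 e4 n1 n2 n3 n4
      rw [show 1 - x^2*q^2 = Y1*Y3 by rw [e1, e3]; ring]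
      field_simp
      rw [e2, e4]
      ring
    exact key _ _ _ _ rfl rfl rfl rfl h2 h4 h6 h8

lemma base_pair (q b : ℂ) (hb : ∀ j : ℕ, 1 - b * q^(j+1) ≠ 0) (hm : ∀ j : ℕ, 1 + q^(j+1) ≠ 0)
    (n : ℕ) (h : ∀ i ≤ n, qPoch q q i ≠ 0) :
    ∑ r ∈ Finset.range (n+1), al q b 0 r / (qPoch q q (n-r) * qPoch (b*q) q (n+r+1))
      = 1 / (qPoch q q n * qPoch (-q) q n) := by
  have hp : ∀ n, qPoch (b*q) q n ≠ 0 := fun n => qPoch_ne (fun j _ => by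
      have := hb j; rwa [show b * q * q^j = b * q^(j+1) by ring])
  have hpm : ∀ n, qPoch (-q) q n ≠ 0 := fun n => qPoch_ne (fun j _ => by
      have := hm j; rwa [show 1 - -q * q^j = 1 + q^(j+1) by ring])
  induction n with
  | zero =>
    have := hb 0
    simp only [zero_add, pow_one] at this
    simp [al, qPoch_zero, qPoch_succ, this]
  | succ n ih =>
    have t := base_tele q b hb hm n h (n+1) le_rfl
    have i1 := ih (fun i hi => h i (by omega))
    rw [Finset.sum_sub_distrib, ← Finset.mul_sum, i1] at t
    rw [Finset.sum_range_succ]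
    have h0 := h n (by omega)
    have h1 := h (n+1) le_rfl
    have h2 := hpm n
    have h3 := hpm (n+1)
    have h4 := hp (n+1+(n+1))
    have h5 := hp (n+1+(n+1)+1)
    have h6 : 1 - b*q^(2*(n+1)+1) ≠ 0 := hb (2*(n+1))
    have hq1 : 1 - q^(n+1) ≠ 0 := by
      have := h1; rw [qPoch_succ] at this
      have := right_ne_zero_of_mul this
      rwa [show q*q^n = q^(n+1) by ring] at this
    have hq2 := hm n
    have hq : 1 - q^(2*n+2) ≠ 0 := by
      rw [show 1 - q^(2*n+2) = (1 - q^(n+1)) * (1 + q^(n+1)) by ring]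
      exact mul_ne_zero hq1 hq2
    apply mul_left_cancel₀ hq
    rw [mul_add, eq_add_of_sub_eq t]
    simp only [al, Nat.sub_self, qPoch_zero, zero_mul, pow_zero, one_mul, mul_one]
    rw [qPoch_succ (b*q) q (n+1+(n+1)), show n+(n+1)+1 = n+1+(n+1) by ring,
      show b*q*q^(n+1+(n+1)) = b*q^(2*(n+1)+1) by ring, show 2*(n+1) = 2*n+2 by ring] at *
    rw [show 1 / (qPoch q q (n+1) * qPoch (-q) q (n+1)) = 1 / ((1 - q^(2*n+2)) * (qPoch q q n * qPoch (-q) q n)) by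
      rw [qPoch_succ, qPoch_succ]; congr 1; ring]
    generalize qPoch (-(b*q)) q (n+1) = A1 at *
    generalize qPoch (b*q) q (n+1) = A2 at *
    generalize qPoch (b*q) q (n+1+(n+1)) = A3 at *
    generalize qPoch (-q) q (n+1) = A4 at *
    generalize qPoch q q (n+1) = A5 at *
    generalize (1 - b*q^(2*n+2+1)) = A6 at *
    generalize (1 - q^(2*n+2)) = A7 at *
    field_simp
    ring

lemma sum_tri_swap (f : ℕ → ℕ → ℂ) (L : ℕ) :
    ∑ n ∈ Finset.range L, ∑ r ∈ Finset.range (n+1), f n r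
      = ∑ r ∈ Finset.range L, ∑ j ∈ Finset.range (L-r), f (r+j) r := by
  rw [Finset.sum_comm' (t' := Finset.range L) (s' := fun r => Finset.Ico r L)]
  · refine Finset.sum_congr rfl fun r _ => ?_
    rw [Finset.sum_Ico_eq_sum_range]
  · intro n r
    simp only [Finset.mem_range, Finset.mem_Ico]
    omega

lemma chain (q b : ℂ) (hb : ∀ j : ℕ, 1 - b * q^(j+1) ≠ 0) (hm : ∀ j : ℕ, 1 + q^(j+1) ≠ 0)
    (l n : ℕ) (h : ∀ i ≤ n, qPoch q q i ≠ 0) :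
    uu q b l n = ∑ r ∈ Finset.range (n+1), al q b l r *
      (qPoch q q n / (qPoch q q (n-r) * qPoch (b*q) q (n+r+1))) := by
  have hp : ∀ n, qPoch (b*q) q n ≠ 0 := fun n => qPoch_ne (fun j _ => by
      have := hb j; rwa [show b * q * q^j = b * q^(j+1) by ring])
  induction l generalizing n with
  | zero =>
    have := base_pair q b hb hm n h
    have h0 := h n le_rfl
    simp only [uu]
    rw [show 1 / qPoch (-q) q n = qPoch q q n * (1 / (qPoch q q n * qPoch (-q) q n)) by
      field_simp, ← this, Finset.mul_sum]
    refine Finset.sum_congr rfl fun r _ => ?_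
    ring
  | succ l ih =>
    simp only [uu]
    rw [Finset.sum_congr rfl (g := fun s => ∑ r ∈ Finset.range (s+1),
      b^s * q^(s^2+s) * qBinom q n s * (al q b l r *
      (qPoch q q s / (qPoch q q (s-r) * qPoch (b*q) q (s+r+1)))))]
    · rw [sum_tri_swap]
      refine Finset.sum_congr rfl fun r hr => ?_
      have hr' : r ≤ n := by simpa [Nat.lt_succ_iff] using hr
      obtain ⟨M, rfl⟩ := Nat.exists_eq_add_of_le hr'
      have hv := vand q M (fun i hi => h i (by omega)) (b*q^(2*r+1)) (fun j => by
        have := hb (2*r+1+j); rwa [show b * q^(2*r+1) * q^(j+1) = b*q^(2*r+1+j+1) by ring])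
      rw [show r+M+1-r = M+1 by omega, show r+M-r = M by omega]
      have ea : al q b (l+1) r = al q b l r * (b^r * q^(r^2+r)) := by
        simp only [al]; ring
      have eb : qPoch (b*q) q (r+M+r+1) = qPoch (b*q) q (2*r+1) * qPoch (b*q^(2*r+1)*q) q M := by
        rw [show r+M+r+1 = (2*r+1)+M by ring, qPoch_add]
        congr 2; ring
      have h1 := h (r+M) le_rfl
      have h2 := h M (by omega)
      rw [ea, eb]
      rw [show al q b l r * (b^r * q^(r^2+r)) * (qPoch q q (r+M) / (qPoch q q M *
        (qPoch (b*q) q (2*r+1) * qPoch (b*q^(2*r+1)*q) q M))) =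
        (al q b l r * (b^r * q^(r^2+r)) * (qPoch q q (r+M) / (qPoch q q M *
        qPoch (b*q) q (2*r+1)))) * (1 / qPoch (b*q^(2*r+1)*q) q M) by
          rw [← mul_assoc (qPoch q q M)]; simp only [div_eq_mul_inv, mul_inv]; ring, ← hv, Finset.mul_sum]
      refine Finset.sum_congr rfl fun j hj => ?_
      have hj' : j ≤ M := by simpa [Nat.lt_succ_iff] using hj
      obtain ⟨d, rfl⟩ := Nat.exists_eq_add_of_le hj'
      have ec : qPoch (b*q) q (r+j+r+1) = qPoch (b*q) q (2*r+1) * qPoch (b*q^(2*r+1)*q) q j := by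
        rw [show r+j+r+1 = (2*r+1)+j by ring, qPoch_add]
        congr 2; ring
      have h3 := h d (by omega)
      have h4 := h j (by omega)
      have h5 := h (r+j) (by omega)
      have h6 := hp (r+j+r+1)
      rw [ec] at h6 ⊢
      have h7 := right_ne_zero_of_mul h6
      have h8 := left_ne_zero_of_mul h6
      simp only [qBinom, show r+j ≤ r+(j+d) by omega, show j ≤ j+d by omega, if_true,
        show r+(j+d)-(r+j) = d by omega, show j+d-j = d by omega, show r+j-r = j by omega]
      have e1 : q^((r+j)^2+(r+j)) = q^(r^2+r) * (q^((2*r+1)*j) * q^(j^2)) := by ring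
      have e2 : b^(r+j) = b^r*b^j := by ring
      have e3 : (b*q^(2*r+1))^j = b^j * q^((2*r+1)*j) := by rw [mul_pow, ← pow_mul]
      rw [e1, e2, e3]
      generalize qPoch (b*q^(2*r+1)*q) q j = B1 at *
      generalize qPoch (b*q) q (2*r+1) = B2 at *
      generalize q^(r^2+r) = B3 at *
      generalize q^((2*r+1)*j) = B4 at *
      generalize q^(j^2) = B5 at *
      field_simp
    · intro s hs
      have hs' : s ≤ n := by simpa [Nat.lt_succ_iff] using hs
      rw [ih s (fun i hi => h i (by omega)), Finset.mul_sum]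

lemma main_fin (q b : ℂ) (hb : ∀ j : ℕ, 1 - b * q^(j+1) ≠ 0) (hm : ∀ j : ℕ, 1 + q^(j+1) ≠ 0)
    (l L : ℕ) (h : ∀ i < L, qPoch q q i ≠ 0) :
    ∑ n ∈ Finset.range L, (-1)^n * b^n * q^(tri n) * uu q b l n
      = ∑ r ∈ Finset.range L, al q b l r * ∑ j ∈ Finset.range (L-r), vv q b r j := by
  rw [Finset.sum_congr rfl (g := fun n => ∑ r ∈ Finset.range (n+1), (-1)^n * b^n * q^(tri n) *
     (al q b l r * (qPoch q q n / (qPoch q q (n-r) * qPoch (b*q) q (n+r+1)))))]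
  · rw [sum_tri_swap]
    refine Finset.sum_congr rfl fun r hr => ?_
    rw [Finset.mul_sum]
    refine Finset.sum_congr rfl fun j hj => ?_
    simp only [Finset.mem_range] at hr hj
    have h1 := h j (by omega)
    have e : qPoch q q (r+j) = qPoch q q j * qPoch (q^(j+1)) q r := by
      rw [add_comm r j, qPoch_add]; congr 2; ring
    rw [show r+j-r = j by omega, show r+j+r+1 = 2*r+j+1 by ring, e, vv, 
      mul_div_mul_left _ _ h1]
    ring
  · intro n hn
    simp only [Finset.mem_range] at hn
    rw [chain q b hb hm l n (fun i hi => h i (by omega)), Finset.mul_sum]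

lemma vv_zero_sum (q b : ℂ) (hb : ∀ j : ℕ, 1 - b * q^(j+1) ≠ 0) (L : ℕ) :
    ∑ j ∈ Finset.range L, vv q b 0 j = 1 - (-1)^L * b^L * q^(tri L) / qPoch (b*q) q L := by
  have hp : ∀ n, qPoch (b*q) q n ≠ 0 := fun n => qPoch_ne (fun j _ => by
      have := hb j; rwa [show b * q * q^j = b * q^(j+1) by ring])
  induction L with
  | zero => simp [qPoch_zero, tri]
  | succ L ih =>
    rw [Finset.sum_range_succ, ih]
    have h1 := hp L
    have h2 := hp (L+1)
    simp only [vv, qPoch_zero, zero_add, mul_zero, mul_one]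
    rw [qPoch_succ] at h2 ⊢
    replace h2 := right_ne_zero_of_mul h2
    rw [tri_succ, pow_add q (tri L), pow_succ (-1:ℂ) L, pow_succ b L,
      show b*q*q^L = b*q^(L+1) by ring] at *
    have key : ∀ Y, Y = 1 - b*q^(L+1) → Y ≠ 0 →
      1 - (-1)^L * b^L * q^(tri L) / qPoch (b*q) q L + 
      (-1)^L * b^L * q^(tri L) / (qPoch (b*q) q L * Y) = 
      1 - (-1)^L*(-1) * (b^L * b) * (q^(tri L) * q^(L+1)) / (qPoch (b*q) q L * Y) := by
      intro Y e hY
      generalize qPoch (b*q) q L = D at *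
      generalize q^(L+1) = x at *
      field_simp
      rw [e]; ring
    exact key _ rfl h2


lemma pad_snoc_lt (k : ℕ) (g : Fin (k+1) → ℕ) (n j : ℕ) (hj : j < k+1) :
    pad (k+1+1) (Fin.snoc (α := fun _ => ℕ) g n) j = pad (k+1) g j := by
  have h2 : j < k+1+1 := by omega
  simp only [pad, hj, h2, dif_pos]
  have : (⟨j, h2⟩ : Fin (k+1+1)) = Fin.castSucc ⟨j, hj⟩ := rfl
  rw [this, Fin.snoc_castSucc (α := fun _ => ℕ)]

lemma pad_snoc_last (k : ℕ) (g : Fin (k+1) → ℕ) (n : ℕ) :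
    pad (k+1+1) (Fin.snoc (α := fun _ => ℕ) g n) (k+1) = n := by
  have h2 : k+1 < k+1+1 := by omega
  simp only [pad, h2, dif_pos]
  have : (⟨k+1, h2⟩ : Fin (k+1+1)) = Fin.last (k+1) := rfl
  rw [this, Fin.snoc_last (α := fun _ => ℕ)]

lemma sum_box_snoc (k L : ℕ) (f : (Fin (k+1) → ℕ) → ℂ) :
    ∑ g ∈ Fintype.piFinset (fun _ : Fin (k+1) => Finset.range L), f g
      = ∑ n ∈ Finset.range L, ∑ g ∈ Fintype.piFinset (fun _ : Fin k => Finset.range L),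
          f (Fin.snoc (α := fun _ => ℕ) g n) := by
  rw [← Finset.sum_product']
  refine Finset.sum_bij' (fun g _ => (g (Fin.last k), Fin.init (α := fun _ => ℕ) g))
    (fun p _ => Fin.snoc (α := fun _ => ℕ) p.2 p.1) ?_ ?_ ?_ ?_ ?_
  · intro g hg
    simp only [Fintype.mem_piFinset, Finset.mem_product] at hg ⊢
    exact ⟨hg _, fun i => hg _⟩
  · intro p hp
    simp only [Fintype.mem_piFinset, Finset.mem_product] at hp ⊢
    intro i
    refine Fin.lastCases ?_ (fun i => ?_) i
    · rw [Fin.snoc_last (α := fun _ => ℕ)]; exact hp.1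
    · rw [Fin.snoc_castSucc (α := fun _ => ℕ)]; exact hp.2 i
  · intro g _
    exact Fin.snoc_init_self (α := fun _ => ℕ) g
  · intro p _
    ext1
    · exact Fin.snoc_last (α := fun _ => ℕ) _ _
    · exact Fin.init_snoc (α := fun _ => ℕ) _ _
  · intro g _
    exact congrArg f (Fin.snoc_init_self (α := fun _ => ℕ) g).symm

lemma box (q : ℂ) (k L : ℕ) (φ : ℕ → ℂ) :
    ∑ g ∈ Fintype.piFinset (fun _ : Fin (k+1) => Finset.range L),
      φ (pad (k+1) g k) * q^(∑ j ∈ Finset.range k, ((pad (k+1) g j)^2 + pad (k+1) g j)) /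
        qPoch (-q) q (pad (k+1) g 0) *
        ∏ i ∈ Finset.range k, qBinom q (pad (k+1) g (i+1)) (pad (k+1) g i)
      = ∑ n ∈ Finset.range L, φ n * uu q 1 k n := by
  induction k generalizing φ with
  | zero =>
    rw [sum_box_snoc]
    refine Finset.sum_congr rfl fun n _ => ?_
    simp [pad, uu, Fin.snoc]
    rfl
  | succ k ih =>
    rw [sum_box_snoc, Finset.sum_comm]
    rw [Finset.sum_congr rfl (g := fun g => 
      (∑ n ∈ Finset.range L, φ n * (q^((pad (k+1) g k)^2 + pad (k+1) g k) * qBinom q n (pad (k+1) g k)))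
       * q^(∑ j ∈ Finset.range k, ((pad (k+1) g j)^2 + pad (k+1) g j)) /
        qPoch (-q) q (pad (k+1) g 0) *
        ∏ i ∈ Finset.range k, qBinom q (pad (k+1) g (i+1)) (pad (k+1) g i))]
    · rw [ih (fun s => ∑ n ∈ Finset.range L, φ n * (q^(s^2 + s) * qBinom q n s))]
      simp only [Finset.sum_mul]
      rw [Finset.sum_comm]
      refine Finset.sum_congr rfl fun n hn => ?_
      simp only [uu, Finset.mul_sum]
      simp only [Finset.mem_range] at hn
      rw [← Finset.sum_subset (Finset.range_mono (show n+1 ≤ L by omega))]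
      · refine Finset.sum_congr rfl fun r _ => ?_
        simp
        ring
      · intro x _ hx
        simp only [Finset.mem_range, not_lt] at hx
        rw [qBinom_gt q (by omega : n < x)]
        simp
    · intro g _
      simp only [Finset.sum_mul, Finset.sum_div]
      refine Finset.sum_congr rfl fun n _ => ?_
      rw [pad_snoc_last, pad_snoc_lt k g n 0 (by omega), Finset.prod_range_succ, Finset.sum_range_succ,
        pad_snoc_last, pad_snoc_lt k g n k (by omega)]
      rw [Finset.sum_congr rfl (fun j hj => by
        rw [pad_snoc_lt k g n j (by simp only [Finset.mem_range] at hj; omega)])]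
      rw [Finset.prod_congr rfl (fun j hj => by
        rw [pad_snoc_lt k g n j (by simp only [Finset.mem_range] at hj; omega),
          pad_snoc_lt k g n (j+1) (by simp only [Finset.mem_range] at hj; omega)])]
      rw [pow_add]
      ring

lemma Z_eq (q : ℂ) (k L : ℕ) :
    Z (k+2) L q = ∑ n ∈ Finset.range L, (-1)^n * 1^n * q^(tri n) * uu q 1 k n := by
  have := box q k L (fun n => (-1)^n * 1^n * q^(tri n))
  rw [← this]
  unfold Z Pterm tri
  refine Finset.sum_congr rfl fun (g : Fin (k+1) → ℕ) _ => ?_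
  change (-1)^(pad (k+1) g k) * q^(pad (k+1) g k * (pad (k+1) g k + 1) / 2 +
     ∑ j ∈ Finset.range k, ((pad (k+1) g j)^2 + pad (k+1) g j)) / qPoch (-q) q (pad (k+1) g 0) *
     ∏ i ∈ Finset.range k, qBinom q (pad (k+1) g (i+1)) (pad (k+1) g i) = _
  rw [pow_add, one_pow, mul_one, mul_assoc ((-1)^(pad (k+1) g k))]

/-- the theta exponent -/
def ee (k r : ℕ) : ℕ := tri r + k * (r^2+r) + r^2

lemma two_ee (k r : ℕ) : 2 * (ee k r : ℤ) = (2*k+3) * r^2 + (2*k+1) * r := by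
  have := two_tri r
  have h : (2 * (tri r : ℤ)) = r * (r+1) := by exact_mod_cast this
  unfold ee
  push_cast
  linarith

lemma ee_modEq {N : ℕ} (hN : Odd N) (x y : ℕ) (c : ℤ) (h : 2 * (x:ℤ) = 2 * y + N * c) :
    x ≡ y [MOD N] := by
  rw [← Int.natCast_modEq_iff]
  have hc : IsCoprime (N:ℤ) 2 := by
    rw [Int.isCoprime_iff_gcd_eq_one]
    have := Nat.coprime_two_right.mpr hN
    exact_mod_cast this
  have : (N:ℤ) ∣ 2 * ((x:ℤ) - y) := ⟨c, by linarith⟩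
  have := hc.dvd_of_dvd_mul_left this
  exact (Int.modEq_iff_dvd.mpr this).symm

lemma ee_reflect {N : ℕ} (hN : Odd N) (k i j : ℕ) (h : i + j + 1 = N) :
    ee k j ≡ ee k i + (2*i+1) [MOD N] := by
  apply ee_modEq hN _ _ ((2*k+3)*((j:ℤ)-i) - 2)
  push_cast
  rw [mul_add, two_ee, two_ee, ← h]
  push_cast
  ring

lemma ee_period {N : ℕ} (hN : Odd N) (k i j : ℕ) : ee k (i + N*j) ≡ ee k i [MOD N] := by
  obtain ⟨c, hc⟩ := hN
  apply ee_modEq ⟨c, hc⟩ _ _ ((2*k+3)*(2*i*j + N*j^2) + (2*k+1)*j)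
  rw [two_ee, two_ee]
  push_cast
  ring

lemma zeta_one_add {ζ : ℂ} {N : ℕ} (hN : Odd N) (hz : ζ^N = 1) (j : ℕ) : 1 + ζ^j ≠ 0 := by
  intro h
  have h1 : ζ^j = -1 := by linear_combination h
  have h2 : (ζ^j)^N = 1 := by rw [← pow_mul, mul_comm, pow_mul, hz, one_pow]
  rw [h1, hN.neg_one_pow] at h2
  norm_num at h2

lemma zeta_poch {ζ : ℂ} {N : ℕ} (hz : IsPrimitiveRoot ζ N) (i : ℕ) (hi : i < N) :
    qPoch ζ ζ i ≠ 0 := by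
  apply qPoch_ne
  intro j hj h
  have : ζ^(j+1) = 1 := by linear_combination -h
  exact hz.pow_ne_one_of_pos_of_lt (by omega) (by omega) this

lemma zeta_prod {ζ : ℂ} {N : ℕ} (hN : 0 < N) (hz : IsPrimitiveRoot ζ N) (b : ℂ) :
    qPoch (b*ζ) ζ N = 1 - b^N := by
  have h := hz.pow_sub_pow_eq_prod_sub_mul 1 b hN
  rw [one_pow] at h
  rw [h]
  unfold qPoch
  refine Finset.prod_bij (fun j _ => ζ^(j+1)) ?_ ?_ ?_ ?_
  · intro j _
    rw [Polynomial.mem_nthRootsFinset hN, ← pow_mul, mul_comm, pow_mul, hz.pow_eq_one, one_pow]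
  · intro i hi j hj hij
    simp only [Finset.mem_range] at hi hj
    have h0 : ζ ≠ 0 := hz.ne_zero (by omega)
    have : ζ^i = ζ^j := by
      have : ζ^i * ζ = ζ^j * ζ := by rw [← pow_succ, ← pow_succ]; exact hij
      exact mul_right_cancel₀ h0 this
    exact hz.pow_inj hi hj this
  · intro x hx
    rw [Polynomial.mem_nthRootsFinset hN] at hx
    have h0 : ζ ≠ 0 := hz.ne_zero (by omega)
    obtain ⟨i, hi, hix⟩ := (haveI : NeZero N := ⟨by omega⟩; 
      hz.eq_pow_of_pow_eq_one (ξ := x * ζ⁻¹) (by rw [mul_pow, hx, inv_pow, hz.pow_eq_one]; simp))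
    refine ⟨i, Finset.mem_range.mpr hi, ?_⟩
    rw [pow_succ, hix]
    field_simp
  · intro j _
    ring

lemma zeta_V {ζ : ℂ} {N : ℕ} (hN : Odd N) (hz : IsPrimitiveRoot ζ N) (b : ℂ) (hb : b^N ≠ 1)
    (hb' : ∀ j : ℕ, 1 - b * ζ^(j+1) ≠ 0) (r : ℕ) (hr : r < N) :
    ∑ j ∈ Finset.range (N-r), vv ζ b r j
      = (1 / (1 - b^N)) * (qPoch ζ ζ r / qPoch (b*ζ) ζ r * (-1)^r * ζ^(tri r) * b^r) := by
  have hp : ∀ n, qPoch (b*ζ) ζ n ≠ 0 := fun n => qPoch_ne (fun j _ => by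
      have := hb' j; rwa [show b * ζ * ζ^j = b * ζ^(j+1) by ring])
  have hbn : 1 - b^N ≠ 0 := sub_ne_zero.mpr (Ne.symm hb)
  induction r with
  | zero =>
    rw [Nat.sub_zero, vv_zero_sum ζ b hb', zeta_prod hN.pos hz]
    have : ζ^(tri N) = 1 := by
      obtain ⟨c, hc⟩ := hN
      have : tri N = N * (c+1) := by
        have := two_tri N
        nlinarith
      rw [this, pow_mul, hz.pow_eq_one, one_pow]
    rw [this, hN.neg_one_pow]
    simp only [qPoch_zero, tri]
    field_simp
    ring
  | succ r ih =>
    have ih := ih (by omega)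
    obtain ⟨L, hL⟩ := Nat.exists_eq_add_of_le (show r+1 ≤ N by omega)
    have hrec := vv_rec ζ b hb' r L
    rw [show N - r = L+1 by omega] at ih
    rw [show N - (r+1) = L by omega]
    have hG : (1 - ζ^(L+1)) * vv ζ b r (L+1) = 0 := by
      have : (1 - ζ^(L+1)) * qPoch (ζ^(L+1+1)) ζ r = 0 := by
        rw [pow_succ ζ (L+1), ← qPoch_succ', qPoch_succ, ← pow_add, show L+1+r = N by omega, hz.pow_eq_one]
        simp
      simp only [vv]
      linear_combination (-1)^(r+(L+1)) * b^(r+(L+1)) * ζ^(tri (r+(L+1))) / qPoch (b*ζ) ζ (2*r+(L+1)+1) * this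
    rw [mul_assoc (-(1 - b*ζ^(2*r+2))), hG, ih] at hrec
    apply mul_left_cancel₀ (hb' r)
    have h1 := hp r
    have h2 := hp (r+1)
    have h3 := hb' r
    rw [qPoch_succ, qPoch_succ, tri_succ, pow_add ζ (tri r), pow_succ (-1:ℂ), pow_succ b]
    rw [show b*ζ*ζ^r = b*ζ^(r+1) by ring, show ζ*ζ^r = ζ^(r+1) by ring]
    have key : ∀ Y, Y ≠ 0 → Y * (1 / (1 - b^N) * (qPoch ζ ζ r * (1 - ζ^(r+1)) / (qPoch (b*ζ) ζ r * Y) *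
      ((-1)^r * (-1)) * (ζ^(tri r) * ζ^(r+1)) * (b^r*b))) = 
      -(b * ζ^(r+1) * (1 - ζ^(r+1)) * (1 / (1 - b^N) * (qPoch ζ ζ r / qPoch (b*ζ) ζ r * (-1)^r * ζ^(tri r) * b^r))) := by
      intro Y hY
      generalize ζ^(r+1) = x at *
      generalize qPoch (b*ζ) ζ r = D at *
      field_simp
    rw [key _ h3]
    linear_combination hrec

/-- truncated theta sum -/
noncomputable def TT (k N : ℕ) (ζ b : ℂ) : ℂ :=
  ∑ r ∈ Finset.range N, ζ^(ee k r) * (b^((k+1)*r) * (1 - b*ζ^(2*r+1)) *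
    (qPoch (-(b*ζ)) ζ r / qPoch (-ζ) ζ r))

lemma zeta_TT {ζ : ℂ} {N : ℕ} (hN : Odd N) (hz : IsPrimitiveRoot ζ N) (k : ℕ) (b : ℂ) (hb : b^N ≠ 1) :
    (1 - b^N) * ∑ n ∈ Finset.range N, (-1)^n * b^n * ζ^(tri n) * uu ζ b k n = TT k N ζ b := by
  have hb' : ∀ j : ℕ, 1 - b * ζ^(j+1) ≠ 0 := by
    intro j h
    apply hb
    have h1 : b * ζ^(j+1) = 1 := by linear_combination -h
    have h2 : (b * ζ^(j+1))^N = 1 := by rw [h1, one_pow]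
    rwa [mul_pow, ← pow_mul, mul_comm (j+1), pow_mul, hz.pow_eq_one, one_pow, mul_one] at h2
  have hbn : 1 - b^N ≠ 0 := sub_ne_zero.mpr (Ne.symm hb)
  rw [main_fin ζ b hb' (fun j => zeta_one_add hN hz.pow_eq_one _) k N (fun i hi => zeta_poch hz i hi),
    Finset.mul_sum, TT]
  refine Finset.sum_congr rfl fun r hr => ?_
  simp only [Finset.mem_range] at hr
  rw [zeta_V hN hz b hb hb' r hr]
  have h1 : qPoch (b*ζ) ζ r ≠ 0 := qPoch_ne (fun j _ => by
      have := hb' j; rwa [show b * ζ * ζ^j = b * ζ^(j+1) by ring])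
  have h2 := zeta_poch hz r hr
  have h3 : qPoch (-ζ) ζ r ≠ 0 := qPoch_ne (fun j _ => by
      have := zeta_one_add hN hz.pow_eq_one (j+1); rwa [show 1 - -ζ * ζ^j = 1 + ζ^(j+1) by ring])
  simp only [al, ee, pow_add ζ (tri r + k*(r^2+r)), pow_add ζ (tri r)]
  rw [show b^((k+1)*r) = b^(k*r)*b^r by ring]
  have hs : (-1:ℂ)^r * (-1)^r = 1 := by rw [← mul_pow]; simp
  generalize qPoch (b*ζ) ζ r = D1 at *
  generalize qPoch (-(b*ζ)) ζ r = D2 at *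
  generalize qPoch (-ζ) ζ r = D3 at *
  generalize qPoch ζ ζ r = D4 at *
  generalize ζ^(2*r+1) = z1 at *
  generalize ζ^(tri r) = z2 at *
  generalize ζ^(k*(r^2+r)) = z3 at *
  generalize ζ^(r^2) = z4 at *
  generalize b^(k*r) = z5 at *
  generalize 1 - b^N = z6 at *
  generalize b^r = z7 at *
  generalize (-1:ℂ)^r = z8 at *
  field_simp
  linear_combination z5*z3*z4*(1-b*z1)*D2*z2*z7 * hs

lemma uu_diff (q : ℂ) (l n : ℕ) : Differentiable ℂ (fun b => uu q b l n) := by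
  induction l generalizing n with
  | zero => simp only [uu]; fun_prop
  | succ l ih =>
    simp only [uu]
    fun_prop

/-- log-derivative sum -/
noncomputable def GG (ζ : ℂ) (r : ℕ) : ℂ := ∑ i ∈ Finset.range r, ζ^(i+1) / (1 + ζ^(i+1))

lemma poch_deriv {ζ : ℂ} (hm : ∀ j : ℕ, 1 + ζ^(j+1) ≠ 0) (r : ℕ) :
    HasDerivAt (fun b => qPoch (-(b*ζ)) ζ r / qPoch (-ζ) ζ r) (GG ζ r) 1 := by
  have hp : ∀ r, qPoch (-ζ) ζ r ≠ 0 := fun r => qPoch_ne (fun j _ => by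
      have := hm j; rwa [show 1 - -ζ * ζ^j = 1 + ζ^(j+1) by ring])
  induction r with
  | zero => simpa [qPoch_zero, GG] using hasDerivAt_const (1:ℂ) (1:ℂ)
  | succ r ih =>
    have h2 : HasDerivAt (fun b : ℂ => (1 + b*ζ^(r+1)) / (1 + ζ^(r+1))) (ζ^(r+1)/(1+ζ^(r+1))) 1 := by
      have : HasDerivAt (fun b : ℂ => 1 + b*ζ^(r+1)) (ζ^(r+1)) 1 := by
        simpa using ((hasDerivAt_id (1:ℂ)).mul_const (ζ^(r+1))).const_add 1
      exact this.div_const _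
    have h3 := ih.mul h2
    have e : GG ζ r * ((1 + 1*ζ^(r+1)) / (1 + ζ^(r+1))) + 
        qPoch (-(1*ζ)) ζ r / qPoch (-ζ) ζ r * (ζ^(r+1)/(1+ζ^(r+1))) = GG ζ (r+1) := by
      rw [one_mul, one_mul, div_self (hm r), div_self (hp r), GG, GG, Finset.sum_range_succ]
      ring
    rw [e] at h3
    refine h3.congr_of_eventuallyEq (Filter.Eventually.of_forall fun b => ?_)
    simp only [qPoch_succ, Pi.mul_apply]
    rw [div_mul_div_comm]
    congr 1 <;> ring

lemma TT_deriv {ζ : ℂ} (hm : ∀ j : ℕ, 1 + ζ^(j+1) ≠ 0) (k N : ℕ) :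
    HasDerivAt (fun b => TT k N ζ b) (∑ r ∈ Finset.range N, ζ^(ee k r) *
      ((k+1) * r * (1 - ζ^(2*r+1)) - ζ^(2*r+1) + (1 - ζ^(2*r+1)) * GG ζ r)) 1 := by
  have hp : ∀ r, qPoch (-ζ) ζ r ≠ 0 := fun r => qPoch_ne (fun j _ => by
      have := hm j; rwa [show 1 - -ζ * ζ^j = 1 + ζ^(j+1) by ring])
  unfold TT
  refine HasDerivAt.fun_sum fun r _ => ?_
  apply HasDerivAt.const_mul
  have h1 : HasDerivAt (fun b : ℂ => b^((k+1)*r)) ((k+1)*r) 1 := by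
    simpa using hasDerivAt_pow ((k+1)*r) (1:ℂ)
  have h2 : HasDerivAt (fun b : ℂ => 1 - b*ζ^(2*r+1)) (-ζ^(2*r+1)) 1 := by
    simpa using ((hasDerivAt_id (1:ℂ)).mul_const (ζ^(2*r+1))).const_sub 1
  have h3 := (h1.mul h2).mul (poch_deriv hm r)
  convert h3 using 1
  · rfl
  · simp only [Pi.mul_apply, one_pow, one_mul]
    rw [div_self (hp r)]
    ring

lemma Z_zeta {ζ : ℂ} {N : ℕ} (hN : Odd N) (hz : IsPrimitiveRoot ζ N) (k : ℕ) :
    -(N:ℂ) * Z (k+2) N ζ = ∑ r ∈ Finset.range N, ζ^(ee k r) *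
      ((k+1) * r * (1 - ζ^(2*r+1)) - ζ^(2*r+1) + (1 - ζ^(2*r+1)) * GG ζ r) := by
  have hm : ∀ j : ℕ, 1 + ζ^(j+1) ≠ 0 := fun j => zeta_one_add hN hz.pow_eq_one _
  have hT := TT_deriv hm k N
  have hD : Differentiable ℂ (fun b => ∑ n ∈ Finset.range N, (-1)^n * b^n * ζ^(tri n) * uu ζ b k n) := by
    have := uu_diff ζ k
    fun_prop
  have hF := (((hasDerivAt_pow N (1:ℂ)).const_sub 1).mul (hD 1).hasDerivAt)
  have hev : ∀ᶠ b in nhdsWithin (1:ℂ) {1}ᶜ, b^N ≠ 1 := by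
    have hfin : ({b : ℂ | b^N = 1} \ {1}).Finite := by
      refine Set.Finite.subset (Polynomial.nthRootsFinset N (1:ℂ)).finite_toSet ?_
      intro b hb
      exact (Polynomial.mem_nthRootsFinset hN.pos _).mpr hb.1
    have : ({b : ℂ | b^N = 1} \ {1})ᶜ ∈ nhds (1:ℂ) := hfin.isClosed.isOpen_compl.mem_nhds (by simp)
    filter_upwards [nhdsWithin_le_nhds this, self_mem_nhdsWithin] with b hb hb1 hbN
    exact hb ⟨hbN, hb1⟩
  have hEq := (hF.continuousAt.eventuallyEq_nhds_iff_eventuallyEq_nhdsNE hT.continuousAt).mp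
    (hev.mono fun b hb => zeta_TT hN hz k b hb)
  have := (hT.congr_of_eventuallyEq hEq).unique hF
  rw [this, Z_eq]
  simp

lemma GG_reflect {ζ : ℂ} {N : ℕ} (hN : Odd N) (hz : ζ^N = 1) (i j : ℕ) (h : i + j + 1 = N) :
    GG ζ j = GG ζ (N-1) - i + GG ζ i := by
  induction i generalizing j with
  | zero => simp [GG, ← h]
  | succ i ih =>
    have := ih (j+1) (by omega)
    have e1 : GG ζ (j+1) = GG ζ j + ζ^(j+1) / (1 + ζ^(j+1)) := by
      simp [GG, Finset.sum_range_succ]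
    have e2 : GG ζ (i+1) = GG ζ i + ζ^(i+1) / (1 + ζ^(i+1)) := by
      simp [GG, Finset.sum_range_succ]
    have e3 : ζ^(j+1) / (1 + ζ^(j+1)) + ζ^(i+1) / (1 + ζ^(i+1)) = 1 := by
      have h1 := zeta_one_add hN hz (j+1)
      have h2 := zeta_one_add hN hz (i+1)
      have h3 : ζ^(j+1) * ζ^(i+1) = 1 := by rw [← pow_add, ← hz]; congr 1; omega
      field_simp
      linear_combination h3
    push_cast
    linear_combination this - e1 - e2 - e3

lemma c_reflect {ζ : ℂ} {N : ℕ} (hN : Odd N) (hz : ζ^N = 1) (k i j : ℕ) (h : i + j + 1 = N) :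
    ζ^(ee k j) * (1 - ζ^(2*j+1)) = -(ζ^(ee k i) * (1 - ζ^(2*i+1))) := by
  have h1 := pow_eq_pow_of_modEq (ee_reflect hN k i j h) hz
  have h2 := pow_eq_pow_of_modEq (ee_reflect hN k j i (by omega)) hz
  rw [pow_add] at h1 h2
  linear_combination h2 + h1

lemma c_sum {ζ : ℂ} {N : ℕ} (hN : Odd N) (hz : ζ^N = 1) (k : ℕ) :
    ∑ r ∈ Finset.range N, ζ^(ee k r) * (1 - ζ^(2*r+1)) = 0 := by
  have h := Finset.sum_range_reflect (fun r => ζ^(ee k r) * (1 - ζ^(2*r+1))) N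
  rw [Finset.sum_congr rfl (g := fun r => -(ζ^(ee k r) * (1 - ζ^(2*r+1)))), Finset.sum_neg_distrib] at h
  · linear_combination (-1/2) * h
  · intro r hr
    simp only [Finset.mem_range] at hr
    exact c_reflect hN hz k r _ (by omega)

lemma c_sum_G {ζ : ℂ} {N : ℕ} (hN : Odd N) (hz : ζ^N = 1) (k : ℕ) :
    ∑ r ∈ Finset.range N, ζ^(ee k r) * (1 - ζ^(2*r+1)) * GG ζ r
      = (1/2) * ∑ r ∈ Finset.range N, ζ^(ee k r) * (1 - ζ^(2*r+1)) * r := by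
  have h := Finset.sum_range_reflect (fun r => ζ^(ee k r) * (1 - ζ^(2*r+1)) * GG ζ r) N
  rw [Finset.sum_congr rfl (g := fun r => -GG ζ (N-1) * (ζ^(ee k r) * (1 - ζ^(2*r+1)))
     + ζ^(ee k r) * (1 - ζ^(2*r+1)) * r - ζ^(ee k r) * (1 - ζ^(2*r+1)) * GG ζ r), 
     Finset.sum_sub_distrib, Finset.sum_add_distrib, ← Finset.mul_sum, c_sum hN hz] at h
  · linear_combination (-1/2) * h
  · intro r hr
    simp only [Finset.mem_range] at hr
    rw [c_reflect hN hz k r (N-1-r) (by omega), GG_reflect hN hz r (N-1-r) (by omega)]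
    ring

lemma Z_final {ζ : ℂ} {N : ℕ} (hN : Odd N) (hz : IsPrimitiveRoot ζ N) (k : ℕ) :
    -(N:ℂ) * Z (k+2) N ζ = ((2*k+3)/2) * ∑ r ∈ Finset.range N, ζ^(ee k r) * (1 - ζ^(2*r+1)) * r
       - ∑ r ∈ Finset.range N, ζ^(ee k r) * ζ^(2*r+1) := by
  rw [Z_zeta hN hz, Finset.sum_congr rfl (g := fun r => (k+1) * (ζ^(ee k r) * (1 - ζ^(2*r+1)) * r)
    - ζ^(ee k r) * ζ^(2*r+1) + ζ^(ee k r) * (1 - ζ^(2*r+1)) * GG ζ r) (fun r _ => by ring),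
    Finset.sum_add_distrib, Finset.sum_sub_distrib, ← Finset.mul_sum, c_sum_G hN hz.pow_eq_one]
  ring


lemma poch_bd {q : ℂ} (hq : ‖q‖ < 1) : ∃ C : ℝ, 1 ≤ C ∧ ∀ x : ℂ, ‖x‖ ≤ ‖q‖ → ∀ n,
    ‖qPoch x q n‖ ≤ C ∧ ‖(qPoch x q n)⁻¹‖ ≤ C := by
  set a := ‖q‖ with ha
  have ha0 : 0 ≤ a := norm_nonneg q
  have h1a : 0 < 1 - a := by linarith
  have hgeo : ∀ n, ∑ j ∈ Finset.range n, a^(j+1) ≤ 1/(1-a) := by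
    intro n
    calc ∑ j ∈ Finset.range n, a^(j+1) ≤ ∑ j ∈ Finset.range n, a^j :=
          Finset.sum_le_sum fun j _ => pow_le_pow_of_le_one ha0 hq.le (by omega)
      _ ≤ ∑' j, a^j := (summable_geometric_of_lt_one ha0 hq).sum_le_tsum _
          (fun j _ => by positivity)
      _ = 1/(1-a) := by rw [tsum_geometric_of_lt_one ha0 hq, one_div]
  refine ⟨Real.exp (1/(1-a) * (1/(1-a))), Real.one_le_exp (by positivity), fun x hx n => ?_⟩
  have hxj : ∀ j, ‖x * q^j‖ ≤ a^(j+1) := by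
    intro j
    rw [norm_mul, norm_pow, pow_succ']
    gcongr
  have key : ∀ f : ℕ → ℝ, (∀ j, 0 ≤ f j) → (∀ j, f j ≤ Real.exp (a^(j+1) * (1/(1-a)))) →
      ∏ j ∈ Finset.range n, f j ≤ Real.exp (1/(1-a) * (1/(1-a))) := by
    intro f hf0 hf
    calc ∏ j ∈ Finset.range n, f j ≤ ∏ j ∈ Finset.range n, Real.exp (a^(j+1) * (1/(1-a))) :=
          Finset.prod_le_prod (fun j _ => hf0 j) (fun j _ => hf j)
      _ = Real.exp ((∑ j ∈ Finset.range n, a^(j+1)) * (1/(1-a))) := by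
          rw [← Real.exp_sum, Finset.sum_mul]
      _ ≤ _ := by
          apply Real.exp_le_exp.mpr
          exact mul_le_mul_of_nonneg_right (hgeo n) (by positivity)
  have h1 : 1 ≤ 1/(1-a) := by rw [le_div_iff₀ h1a]; linarith
  have hu : ∀ j, a^(j+1) ≤ a := fun j => by
    calc a^(j+1) ≤ a^1 := pow_le_pow_of_le_one ha0 hq.le (by omega)
      _ = a := pow_one a
  constructor
  · unfold qPoch
    rw [norm_prod]
    refine key _ (fun j => norm_nonneg _) fun j => ?_
    calc ‖1 - x * q^j‖ ≤ ‖(1:ℂ)‖ + ‖x * q^j‖ := norm_sub_le _ _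
      _ ≤ a^(j+1) * (1/(1-a)) + 1 := by
        rw [norm_one]
        have : a^(j+1) * 1 ≤ a^(j+1) * (1/(1-a)) := mul_le_mul_of_nonneg_left h1 (by positivity)
        linarith [hxj j]
      _ ≤ _ := Real.add_one_le_exp _
  · unfold qPoch
    rw [norm_inv, norm_prod, ← Finset.prod_inv_distrib]
    refine key _ (fun j => by positivity) fun j => ?_
    have hlow : 1 - a^(j+1) ≤ ‖1 - x * q^j‖ := by
      have := norm_sub_norm_le (1:ℂ) (x*q^j)
      rw [norm_one] at this
      linarith [hxj j]
    have hp : 0 < 1 - a^(j+1) := by linarith [hu j]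
    calc ‖1 - x * q^j‖⁻¹ ≤ (1 - a^(j+1))⁻¹ := inv_anti₀ hp hlow
      _ ≤ a^(j+1) * (1/(1-a)) + 1 := by
        have e1 : (1 - a^(j+1))⁻¹ = a^(j+1) * (1/(1-a^(j+1))) + 1 := by
          field_simp
          ring
        rw [e1]
        have : 1/(1-a^(j+1)) ≤ 1/(1-a) := one_div_le_one_div_of_le h1a (by linarith [hu j])
        gcongr
      _ ≤ _ := Real.add_one_le_exp _

lemma box_atTop (k : ℕ) : Filter.Tendsto
    (fun L : ℕ => Fintype.piFinset (fun _ : Fin k => Finset.range L)) Filter.atTop Filter.atTop := by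
  apply Filter.tendsto_atTop_finset_of_monotone
  · intro L L' h
    exact Fintype.piFinset_subset _ _ fun _ => Finset.range_mono h
  · intro x
    refine ⟨∑ i, x i + 1, ?_⟩
    rw [Fintype.mem_piFinset]
    intro i
    rw [Finset.mem_range]
    have := Finset.single_le_sum (f := x) (fun i _ => Nat.zero_le _) (Finset.mem_univ i)
    omega

lemma summable_box (k : ℕ) (a : ℝ) (ha0 : 0 ≤ a) (ha : a < 1) :
    Summable (fun n : Fin k → ℕ => ∏ i, a^(n i)) := by
  apply summable_of_sum_le (c := (1/(1-a))^k) (fun n => by positivity)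
  intro s
  obtain ⟨L, hL⟩ := ((box_atTop k).eventually (Filter.eventually_ge_atTop s)).exists
  calc ∑ n ∈ s, ∏ i, a^(n i)
      ≤ ∑ n ∈ Fintype.piFinset (fun _ : Fin k => Finset.range L), ∏ i, a^(n i) :=
        Finset.sum_le_sum_of_subset_of_nonneg hL (fun n _ _ => by positivity)
    _ = ∏ i : Fin k, ∑ j ∈ Finset.range L, a^j := by
        rw [Finset.prod_univ_sum]
    _ = (∑ j ∈ Finset.range L, a^j)^k := by simp
    _ ≤ (1/(1-a))^k := by
        apply pow_le_pow_left₀ (Finset.sum_nonneg fun j _ => by positivity)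
        rw [one_div, ← tsum_geometric_of_lt_one ha0 ha]
        exact (summable_geometric_of_lt_one ha0 ha).sum_le_tsum _ (fun j _ => by positivity)

lemma tri_ge (n : ℕ) : n ≤ tri n := by
  have := two_tri n
  nlinarith

lemma qBinom_bd {q : ℂ} {C : ℝ} (hC1 : 1 ≤ C)
    (hC : ∀ x : ℂ, ‖x‖ ≤ ‖q‖ → ∀ n, ‖qPoch x q n‖ ≤ C ∧ ‖(qPoch x q n)⁻¹‖ ≤ C) (n k : ℕ) :
    ‖qBinom q n k‖ ≤ C * (C * C) := by
  have hC0 : 0 ≤ C := by linarith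
  unfold qBinom
  split_ifs
  · rw [div_eq_mul_inv, mul_inv, norm_mul, norm_mul]
    have h := hC q le_rfl
    gcongr
    · exact (h n).1
    · exact (h _).2
    · exact (h _).2
  · rw [norm_zero]; positivity

lemma Pterm_summable {q : ℂ} (hq : ‖q‖ < 1) (k : ℕ) :
    Summable (fun n : Fin (k+1) → ℕ => Pterm (k+2) q (pad (k+1) n)) := by
  obtain ⟨C, hC1, hC⟩ := poch_bd hq
  have hC0 : 0 ≤ C := by linarith
  refine Summable.of_norm_bounded
    (g := fun n : Fin (k+1) → ℕ => (C * (C * (C * C))^k) * ∏ i, ‖q‖^(n i))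
    ((summable_box (k+1) ‖q‖ (norm_nonneg q) hq).mul_left _) fun n => ?_
  unfold Pterm
  simp only [Nat.add_sub_cancel]
  set p := pad (k+1) n with hp
  have hprod : ∏ i, ‖q‖^(n i) = ‖q‖^(∑ j ∈ Finset.range (k+1), p j) := by
    rw [← Finset.prod_pow_eq_pow_sum, Finset.prod_range]
    refine Finset.prod_congr rfl fun i _ => ?_
    simp [hp, pad, Nat.lt_of_lt_of_le i.isLt le_rfl]
  rw [hprod, norm_mul, norm_div, norm_mul, norm_pow, norm_pow, norm_neg, norm_one, one_pow, one_mul,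
    norm_prod]
  have e1 : ‖q‖^(p k * (p k + 1)/2 + ∑ j ∈ Finset.range k, (p j^2 + p j))
      ≤ ‖q‖^(∑ j ∈ Finset.range (k+1), p j) := by
    apply pow_le_pow_of_le_one (norm_nonneg q) hq.le
    rw [Finset.sum_range_succ, add_comm]
    apply add_le_add (tri_ge (p k))
    exact Finset.sum_le_sum fun j _ => by omega
  have e2 : ∏ i ∈ Finset.range k, ‖qBinom q (p (i+1)) (p i)‖ ≤ (C * (C * C))^k := by
    calc _ ≤ ∏ i ∈ Finset.range k, (C * (C * C)) :=
          Finset.prod_le_prod (fun _ _ => norm_nonneg _) (fun _ _ => qBinom_bd hC1 hC _ _)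
      _ = _ := by simp
  have e3 := (hC (-q) (by rw [norm_neg]) (p 0)).2
  rw [norm_inv] at e3
  rw [div_eq_mul_inv]
  calc _ ≤ ‖q‖^(∑ j ∈ Finset.range (k+1), p j) * C * (C * (C * C))^k := by
        gcongr
    _ = _ := by ring

lemma P_lim {q : ℂ} (hq : ‖q‖ < 1) (k : ℕ) :
    Filter.Tendsto (fun L => Z (k+2) L q) Filter.atTop (nhds (P (k+2) q)) :=
  (Pterm_summable hq k).hasSum.comp (box_atTop (k+1))

lemma ne_of_norm {q : ℂ} (hq : ‖q‖ < 1) (j : ℕ) : 1 - q^(j+1) ≠ 0 ∧ 1 + q^(j+1) ≠ 0 := by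
  have h : ‖q^(j+1)‖ < 1 := by
    rw [norm_pow]; exact pow_lt_one₀ (norm_nonneg _) hq (by omega)
  constructor
  · intro h'
    rw [← sub_eq_zero.mp h', norm_one] at h
    linarith
  · intro h'
    rw [← norm_neg, ← eq_neg_of_add_eq_zero_left h', norm_one] at h
    linarith

lemma vv_bd {q : ℂ} (hq : ‖q‖ < 1) : ∃ C : ℝ, 0 ≤ C ∧ ∀ r j, ‖vv q 1 r j‖ ≤ C * ‖q‖^j := by
  obtain ⟨C, hC1, hC⟩ := poch_bd hq
  have hC0 : 0 ≤ C := by linarith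
  refine ⟨C * C, by positivity, fun r j => ?_⟩
  unfold vv
  rw [div_eq_mul_inv, norm_mul, norm_mul, norm_mul, norm_mul, norm_pow, norm_pow, norm_pow, norm_neg,
    norm_one, one_pow, one_mul, one_mul]
  have e1 : ‖q‖^(tri (r+j)) ≤ ‖q‖^j :=
    pow_le_pow_of_le_one (norm_nonneg q) hq.le (by have := tri_ge (r+j); omega)
  have e2 : ‖qPoch (q^(j+1)) q r‖ ≤ C := by
    refine (hC _ ?_ r).1
    rw [norm_pow]
    calc ‖q‖^(j+1) ≤ ‖q‖^1 := pow_le_pow_of_le_one (norm_nonneg q) hq.le (by omega)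
      _ = _ := pow_one _
  have e3 : ‖(qPoch (1*q) q (2*r+j+1))⁻¹‖ ≤ C := by
    rw [one_mul]; exact (hC _ le_rfl _).2
  calc _ ≤ ‖q‖^j * C * C := by gcongr
    _ = _ := by ring

lemma vv_lim0 {q : ℂ} (hq : ‖q‖ < 1) (r : ℕ) :
    Filter.Tendsto (fun j => vv q 1 r j) Filter.atTop (nhds 0) := by
  obtain ⟨C, hC0, hC⟩ := vv_bd hq
  apply squeeze_zero_norm (fun j => hC r j)
  simpa using (tendsto_pow_atTop_nhds_zero_of_lt_one (norm_nonneg q) hq).const_mul C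

lemma vv_lim {q : ℂ} (hq : ‖q‖ < 1) (r : ℕ) :
    Filter.Tendsto (fun L => ∑ j ∈ Finset.range L, vv q 1 r j) Filter.atTop
      (nhds ((-1)^r * q^(tri r))) := by
  have hb : ∀ j : ℕ, 1 - 1 * q^(j+1) ≠ 0 := fun j => by
    rw [one_mul]; exact (ne_of_norm hq j).1
  have hqL : Filter.Tendsto (fun L : ℕ => q^L) Filter.atTop (nhds 0) :=
    tendsto_pow_atTop_nhds_zero_of_norm_lt_one hq
  induction r with
  | zero =>
    obtain ⟨C, hC1, hC⟩ := poch_bd hq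
    have h : Filter.Tendsto (fun L : ℕ => (-1)^L * 1^L * q^(tri L) / qPoch (1*q) q L)
        Filter.atTop (nhds 0) := by
      apply squeeze_zero_norm (a := fun L => ‖q‖^L * C)
      · intro L
        rw [div_eq_mul_inv, norm_mul, norm_mul, norm_mul, norm_pow, norm_pow, norm_pow, norm_neg,
          norm_one, one_pow, one_mul, one_mul, one_mul]
        exact mul_le_mul (pow_le_pow_of_le_one (norm_nonneg q) hq.le (tri_ge L))
          (hC q le_rfl L).2 (norm_nonneg _) (by positivity)
      · simpa using (tendsto_pow_atTop_nhds_zero_of_lt_one (norm_nonneg q) hq).mul_const C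
    have := h.const_sub 1
    simp only [vv_zero_sum q 1 hb]
    simpa [tri] using this
  | succ r ih =>
    have hr : (1 - q^(r+1)) ≠ 0 := (ne_of_norm hq r).1
    have e : ∀ L, ∑ j ∈ Finset.range L, vv q 1 (r+1) j =
        (-(1 - 1*q^(2*r+2)) * (1 - q^(L+1)) * vv q 1 r (L+1)) / (1 - q^(r+1))
          - q^(r+1) * ∑ j ∈ Finset.range (L+1), vv q 1 r j := by
      intro L
      have := vv_rec q 1 hb r L
      rw [eq_sub_iff_add_eq, eq_div_iff hr, ← this]
      ring
    simp only [e]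
    have l1 := (Filter.tendsto_add_atTop_iff_nat 1).mpr ih
    have l2 := (Filter.tendsto_add_atTop_iff_nat 1).mpr (vv_lim0 hq r)
    have l3 := (Filter.tendsto_add_atTop_iff_nat 1).mpr hqL
    have := ((((l3.const_sub 1).const_mul (-(1 - 1*q^(2*r+2)))).mul l2).div_const (1 - q^(r+1))).sub
      (l1.const_mul (q^(r+1)))
    convert this using 2
    rw [tri_succ]
    ring

lemma al_one {q : ℂ} (hq : ‖q‖ < 1) (k r : ℕ) :
    al q 1 k r = q^(k*(r^2+r)) * ((-1)^r * q^(r^2) * (1 - q^(2*r+1))) := by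
  have h1 : qPoch q q r ≠ 0 := qPoch_ne fun j _ => by
    have := (ne_of_norm hq j).1; rwa [show q * q^j = q^(j+1) by ring]
  have h2 : qPoch (-q) q r ≠ 0 := qPoch_ne fun j _ => by
    have := (ne_of_norm hq j).2; rwa [show 1 - -q * q^j = 1 + q^(j+1) by ring]
  unfold al
  simp only [one_mul, one_pow]
  field_simp

lemma P_eq {q : ℂ} (hq : ‖q‖ < 1) (k : ℕ) :
    P (k+2) q = ∑' r : ℕ, q^(ee k r) * (1 - q^(2*r+1)) := by
  have hb : ∀ j : ℕ, 1 - 1 * q^(j+1) ≠ 0 := fun j => by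
    rw [one_mul]; exact (ne_of_norm hq j).1
  have hm : ∀ j : ℕ, 1 + q^(j+1) ≠ 0 := fun j => (ne_of_norm hq j).2
  have hp : ∀ i, qPoch q q i ≠ 0 := fun i => qPoch_ne fun j _ => by
    have := (ne_of_norm hq j).1; rwa [show q * q^j = q^(j+1) by ring]
  refine tendsto_nhds_unique (P_lim hq k) ?_
  obtain ⟨C, hC0, hC⟩ := vv_bd hq
  have e : ∀ L, Z (k+2) L q = ∑' r, (if r < L then al q 1 k r * ∑ j ∈ Finset.range (L-r), vv q 1 r j
      else 0) := by
    intro L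
    rw [Z_eq, main_fin q 1 hb hm k L (fun i _ => hp i), tsum_eq_sum (s := Finset.range L)]
    · exact Finset.sum_congr rfl fun r hr => by rw [if_pos (Finset.mem_range.mp hr)]
    · intro r hr
      rw [if_neg (by simpa using hr)]
  simp only [e]
  refine tendsto_tsum_of_dominated_convergence
    (bound := fun r => ‖q‖^r * (2 * (C * (1/(1-‖q‖)))))
    ((summable_geometric_of_lt_one (norm_nonneg q) hq).mul_right _) ?_ ?_
  · intro r
    have h1 : Filter.Tendsto (fun L : ℕ => L - r) Filter.atTop Filter.atTop :=
      Filter.tendsto_sub_atTop_nat r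
    have h2 := ((vv_lim hq r).comp h1).const_mul (al q 1 k r)
    have h3 : al q 1 k r * ((-1)^r * q^(tri r)) = q^(ee k r) * (1 - q^(2*r+1)) := by
      rw [al_one hq]
      have : ((-1:ℂ)^r) * (-1)^r = 1 := by rw [← mul_pow]; simp
      unfold ee
      rw [pow_add, pow_add]
      linear_combination (q^(k*(r^2+r)) * q^(r^2) * (1 - q^(2*r+1)) * q^(tri r)) * this
    rw [h3] at h2
    refine h2.congr' ?_
    filter_upwards [Filter.eventually_gt_atTop r] with L hL
    simp [hL]
  · refine Filter.Eventually.of_forall fun L r => ?_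
    have h1q : 0 < 1 - ‖q‖ := by linarith
    split_ifs
    · rw [norm_mul, al_one hq, norm_mul, norm_mul, norm_mul, norm_pow, norm_pow, norm_pow, norm_neg,
        norm_one, one_pow, one_mul]
      have e1 : ‖q‖^(k*(r^2+r)) ≤ 1 := pow_le_one₀ (norm_nonneg q) hq.le
      have e2 : ‖q‖^(r^2) ≤ ‖q‖^r := pow_le_pow_of_le_one (norm_nonneg q) hq.le (by nlinarith)
      have e3 : ‖1 - q^(2*r+1)‖ ≤ 2 := by
        calc _ ≤ ‖(1:ℂ)‖ + ‖q^(2*r+1)‖ := norm_sub_le _ _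
          _ ≤ 1 + 1 := by
            rw [norm_one, norm_pow]
            gcongr
            exact pow_le_one₀ (norm_nonneg q) hq.le
          _ = 2 := by norm_num
      have e4 : ‖∑ j ∈ Finset.range (L-r), vv q 1 r j‖ ≤ C * (1/(1-‖q‖)) := by
        calc _ ≤ ∑ j ∈ Finset.range (L-r), C * ‖q‖^j := norm_sum_le_of_le _ fun j _ => hC r j
          _ = C * ∑ j ∈ Finset.range (L-r), ‖q‖^j := by rw [Finset.mul_sum]
          _ ≤ _ := by
            gcongr
            rw [one_div, ← tsum_geometric_of_lt_one (norm_nonneg q) hq]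
            exact (summable_geometric_of_lt_one (norm_nonneg q) hq).sum_le_tsum _
              (fun j _ => by positivity)
      calc _ ≤ 1 * (‖q‖^r * 2) * (C * (1/(1-‖q‖))) := by gcongr
        _ = _ := by ring
    · rw [norm_zero]; positivity

lemma gd1 (s x : ℝ) : HasDerivAt (fun x : ℝ => Real.exp (-s*x^2)) (-2*s*x*Real.exp (-s*x^2)) x := by
  have h := ((hasDerivAt_pow 2 x).const_mul (-s)).exp
  convert h using 1
  norm_num
  ring

lemma gd2 (s x : ℝ) : HasDerivAt (fun x : ℝ => -2*s*x*Real.exp (-s*x^2))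
    ((4*s^2*x^2-2*s)*Real.exp (-s*x^2)) x := by
  have h := ((hasDerivAt_id x).const_mul (-2*s)).mul (gd1 s x)
  refine h.congr_deriv ?_
  simp only [id]
  ring

lemma gd2_bd {s x y : ℝ} (hs : 0 < s) (hy : 0 < y) (hx : y ≤ x) :
    ‖(4*s^2*x^2-2*s)*Real.exp (-s*x^2)‖ ≤ 8/y^2 := by
  have hx0 : 0 < x := by linarith
  have hu : 0 ≤ s*x^2 := by positivity
  have h1 := Real.quadratic_le_exp_of_nonneg hu
  have h2 : |4*s^2*x^2-2*s| ≤ 8/x^2 * Real.exp (s*x^2) := by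
    have : |4*s^2*x^2-2*s| ≤ 4*s^2*x^2+2*s := by
      rw [abs_le]; constructor <;> nlinarith [sq_nonneg (s*x)]
    refine this.trans ?_
    rw [div_mul_eq_mul_div, le_div_iff₀ (by positivity)]
    nlinarith
  have h3 : (0:ℝ) < Real.exp (s*x^2) := Real.exp_pos _
  have h4 : Real.exp (-s*x^2) = (Real.exp (s*x^2))⁻¹ := by rw [← Real.exp_neg]; ring_nf
  rw [norm_mul, Real.norm_eq_abs, Real.norm_eq_abs, Real.abs_exp, h4, ← div_eq_mul_inv,
    div_le_iff₀ h3]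
  refine h2.trans ?_
  gcongr

lemma g_taylor {s y x : ℝ} (hs : 0 < s) (hy : 0 < y) (hx : 0 ≤ x) :
    |Real.exp (-s*(y+x)^2) - Real.exp (-s*y^2) - x*(-2*s*y*Real.exp (-s*y^2))| ≤ 8/y^2*x^2 := by
  have hd : ∀ z ∈ Set.Icc y (y+x), ‖-2*s*z*Real.exp (-s*z^2) - -2*s*y*Real.exp (-s*y^2)‖ ≤ 8/y^2*x := by
    intro z hz
    have := Convex.norm_image_sub_le_of_norm_hasDerivWithin_le (s := Set.Icc y (y+x))
      (f := fun x : ℝ => -2*s*x*Real.exp (-s*x^2)) (x := y) (y := z) (C := 8/y^2)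
      (fun w _ => (gd2 s w).hasDerivWithinAt) (fun w hw => gd2_bd hs hy hw.1) (convex_Icc _ _)
      ⟨le_rfl, by linarith⟩ hz
    refine this.trans ?_
    gcongr
    rw [Real.norm_eq_abs, abs_of_nonneg (by linarith [hz.1])]
    linarith [hz.2]
  have := Convex.norm_image_sub_le_of_norm_hasDerivWithin_le (s := Set.Icc y (y+x))
      (f := fun z : ℝ => Real.exp (-s*z^2) - z*(-2*s*y*Real.exp (-s*y^2))) (x := y) (y := y+x)
      (C := 8/y^2*x)
      (f' := fun z => -2*s*z*Real.exp (-s*z^2) - -2*s*y*Real.exp (-s*y^2))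
      (fun w _ => by
        have h := (gd1 s w).sub ((hasDerivAt_id w).mul_const (-2*s*y*Real.exp (-s*y^2)))
        rw [one_mul] at h
        exact h.hasDerivWithinAt) hd (convex_Icc _ _)
      ⟨le_rfl, by linarith⟩ ⟨by linarith, le_rfl⟩
  rw [Real.norm_eq_abs, Real.norm_eq_abs, add_sub_cancel_left, abs_of_nonneg hx] at this
  calc _ = |Real.exp (-s * (y + x) ^ 2) - (y + x) * (-2 * s * y * Real.exp (-s * y ^ 2)) -
      (Real.exp (-s * y ^ 2) - y * (-2 * s * y * Real.exp (-s * y ^ 2)))| := by congr 1; ring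
    _ ≤ _ := this
    _ = _ := by ring

lemma SS_summable {s b : ℝ} (hs : 0 < s) (hb : 0 ≤ b) :
    Summable (fun j : ℕ => Real.exp (-s*(j+b)^2)) := by
  refine Summable.of_nonneg_of_le (fun _ => (Real.exp_pos _).le) (fun j => ?_)
    (Real.summable_exp_nat_mul_iff.mpr (neg_lt_zero.mpr hs))
  apply Real.exp_le_exp.mpr
  have h1 : (j:ℝ) ≤ (j+b)^2 := by
    have h2 : (j:ℝ) ≤ (j:ℝ)^2 := by
      rcases Nat.eq_zero_or_pos j with h | h
      · simp [h]
      · have : (1:ℝ) ≤ j := by exact_mod_cast h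
        nlinarith
    have : (0:ℝ) ≤ j := by positivity
    nlinarith
  nlinarith

noncomputable def SS (b s : ℝ) : ℝ := ∑' j : ℕ, Real.exp (-s*(j+b)^2)

lemma SS_lim {b : ℝ} (hb : 0 ≤ b) :
    Filter.Tendsto (fun s => SS 0 s - SS b s) (nhdsWithin 0 (Set.Ioi 0)) (nhds b) := by
  have key : Filter.Tendsto (fun s : ℝ => ∑' j : ℕ, (Real.exp (-s*(j+0)^2) - Real.exp (-s*(j+b)^2)
      - b * (Real.exp (-s*(j+0)^2) - Real.exp (-s*(j+1)^2)))) (nhdsWithin 0 (Set.Ioi 0))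
      (nhds (∑' j : ℕ, (0:ℝ))) := by
    refine tendsto_tsum_of_dominated_convergence
      (bound := fun j : ℕ => (if j = 0 then 1 + b else 0) + 8*(b^2+b) * (1/(j:ℝ)^2)) ?_ ?_ ?_
    · apply Summable.add
      · exact (hasSum_ite_eq 0 (1+b)).summable
      · exact (Real.summable_one_div_nat_pow.mpr (by norm_num)).mul_left _
    · intro j
      apply tendsto_nhdsWithin_of_tendsto_nhds
      have : Continuous (fun s : ℝ => Real.exp (-s*(j+0)^2) - Real.exp (-s*(j+b)^2)
        - b * (Real.exp (-s*(j+0)^2) - Real.exp (-s*(j+1)^2))) := by fun_prop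
      simpa using this.tendsto 0
    · filter_upwards [self_mem_nhdsWithin] with s hs j
      have hs : 0 < s := hs
      rcases Nat.eq_zero_or_pos j with h | h
      · subst h
        have a1 : Real.exp (-s*b^2) ≤ 1 := Real.exp_le_one_iff.mpr (by nlinarith [sq_nonneg b])
        have a2 : Real.exp (-s) ≤ 1 := Real.exp_le_one_iff.mpr (by linarith)
        have a3 := Real.exp_pos (-s*b^2)
        have a4 := Real.exp_pos (-s)
        simp only [Nat.cast_zero, zero_add, one_pow, mul_one, if_true]
        norm_num
        rw [neg_mul] at a1 a3
        rw [abs_le]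
        constructor <;> nlinarith [mul_nonneg hb a4.le, mul_nonneg hb (sub_nonneg.mpr a2)]
      · have hj : (0:ℝ) < j := by exact_mod_cast h
        have t1 := abs_le.mp (g_taylor hs hj hb)
        have t2 := abs_le.mp (g_taylor hs hj (zero_le_one))
        rw [if_neg (by omega), zero_add, add_zero, Real.norm_eq_abs, abs_le]
        have e8 : 8*(b^2+b)*(1/(j:ℝ)^2) = 8/(j:ℝ)^2*b^2 + b*(8/(j:ℝ)^2*1^2) := by ring
        rw [e8]
        constructor <;> nlinarith [mul_le_mul_of_nonneg_left t2.1 hb, mul_le_mul_of_nonneg_left t2.2 hb]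
  rw [tsum_zero] at key
  have := key.add_const b
  rw [zero_add] at this
  refine this.congr' ?_
  filter_upwards [self_mem_nhdsWithin] with s hs
  have hs : 0 < s := hs
  have s0 := SS_summable hs le_rfl
  have sb := SS_summable hs hb
  have s1 := SS_summable hs zero_le_one
  rw [((s0.sub sb).tsum_sub ((s0.sub s1).mul_left b)), s0.tsum_sub sb, tsum_mul_left, s0.tsum_sub s1]
  have : ∑' j : ℕ, Real.exp (-s*(j+0)^2) = 1 + ∑' j : ℕ, Real.exp (-s*(j+1)^2) := by
    rw [s0.tsum_eq_zero_add]
    simp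
  unfold SS
  linear_combination (-b) * this

lemma exp_pow_form (z : ℂ) (t : ℝ) (n : ℕ) :
    (z * (Real.exp (-t) : ℂ))^n = z^n * ((Real.exp (-t*n) : ℝ) : ℂ) := by
  rw [mul_pow, ← Complex.ofReal_pow, ← Real.exp_nat_mul]
  congr 3
  ring

lemma ee_real (k r : ℕ) (t : ℝ) (N i j : ℕ) (hN : 0 < N) (hr : r = i + N*j) :
    -t*(ee k r : ℕ) = t*((2*k+3)/2*((2*k+1)/(2*(2*k+3)))^2)
      + -(t*((2*k+3)/2)*N^2) * (j + (i + (2*k+1)/(2*(2*k+3)))/N)^2 := by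
  have h : 2 * (ee k r : ℝ) = (2*k+3)*r^2 + (2*k+1)*r := by exact_mod_cast two_ee k r
  have hk : (2*(k:ℝ)+3) ≠ 0 := by positivity
  have hN' : (N:ℝ) ≠ 0 := by positivity
  have he : (ee k r : ℝ) = ((2*k+3)*r^2 + (2*k+1)*r)/2 := by linarith
  rw [he, hr]
  push_cast
  field_simp
  ring

lemma ee_real2 (k r : ℕ) (t : ℝ) (N i j : ℕ) (hN : 0 < N) (hr : r = i + N*j) :
    -t*((ee k r + (2*r+1) : ℕ) : ℝ) = t*((2*k+3)/2*((2*k+1)/(2*(2*k+3)))^2)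
      + -(t*((2*k+3)/2)*N^2) * (j + (i + (2*k+5)/(2*(2*k+3)))/N)^2 := by
  have h : 2 * (ee k r : ℝ) = (2*k+3)*r^2 + (2*k+1)*r := by exact_mod_cast two_ee k r
  have hk : (2*(k:ℝ)+3) ≠ 0 := by positivity
  have hN' : (N:ℝ) ≠ 0 := by positivity
  have he : (ee k r : ℝ) = ((2*k+3)*r^2 + (2*k+1)*r)/2 := by linarith
  push_cast
  rw [he, hr]
  push_cast
  field_simp
  ring

lemma F_summable {q : ℂ} (hq : ‖q‖ < 1) (k : ℕ) :
    Summable (fun r : ℕ => q^(ee k r) * (1 - q^(2*r+1))) := by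
  refine Summable.of_norm_bounded
    ((summable_geometric_of_lt_one (norm_nonneg q) hq).mul_right 2) fun r => ?_
  rw [norm_mul, norm_pow]
  have e2 : ‖q‖^(ee k r) ≤ ‖q‖^r := pow_le_pow_of_le_one (norm_nonneg q) hq.le (by
    unfold ee; have := tri_ge r; omega)
  have e3 : ‖1 - q^(2*r+1)‖ ≤ 2 := by
    calc _ ≤ ‖(1:ℂ)‖ + ‖q^(2*r+1)‖ := norm_sub_le _ _
      _ ≤ 1 + 1 := by
        rw [norm_one, norm_pow]
        gcongr
        exact pow_le_one₀ (norm_nonneg q) hq.le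
      _ = 2 := by norm_num
  gcongr

lemma sum_residues {f : ℕ → ℂ} (hf : Summable f) {N : ℕ} (hN : 0 < N) :
    ∑' n, f n = ∑ i ∈ Finset.range N, ∑' m, f (i + N*m) := by
  have : NeZero N := ⟨hN.ne'⟩
  rw [Nat.sumByResidueClasses hf N]
  obtain ⟨n, rfl⟩ : ∃ n, N = n+1 := ⟨N-1, by omega⟩
  rw [Finset.sum_range]
  rfl

lemma F_form {ζ : ℂ} {N : ℕ} (hN : Odd N) (hz : ζ^N = 1) (k : ℕ) {t : ℝ} (ht : 0 < t)
    (hq : ‖ζ * (Real.exp (-t) : ℂ)‖ < 1) :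
    ∑' r : ℕ, (ζ * (Real.exp (-t) : ℂ))^(ee k r) * (1 - (ζ * (Real.exp (-t) : ℂ))^(2*r+1))
      = ((Real.exp (t*((2*k+3)/2*((2*k+1)/(2*(2*k+3)))^2)) : ℝ) : ℂ) *
        ∑ i ∈ Finset.range N, ζ^(ee k i) *
          (-((SS 0 (t*((2*k+3)/2)*N^2) - SS ((i + (2*k+1)/(2*(2*k+3)))/N) (t*((2*k+3)/2)*N^2) : ℝ) : ℂ)
           + ζ^(2*i+1) * ((SS 0 (t*((2*k+3)/2)*N^2)
              - SS ((i + (2*k+5)/(2*(2*k+3)))/N) (t*((2*k+3)/2)*N^2) : ℝ) : ℂ)) := by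
  have hN0 : 0 < N := hN.pos
  rw [sum_residues (F_summable hq k) hN0]
  set s : ℝ := t*((2*k+3)/2)*N^2 with hs
  have hs0 : 0 < s := by positivity
  set E : ℝ := t*((2*k+3)/2*((2*k+1)/(2*(2*k+3)))^2) with hE
  have hterm : ∀ i j : ℕ, (ζ * (Real.exp (-t) : ℂ))^(ee k (i+N*j)) *
      (1 - (ζ * (Real.exp (-t) : ℂ))^(2*(i+N*j)+1)) =
      ((Real.exp E : ℝ) : ℂ) * ζ^(ee k i) *
        (((Real.exp (-s*(j + (i + (2*k+1)/(2*(2*k+3)))/N)^2) : ℝ) : ℂ)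
        - ζ^(2*i+1) * ((Real.exp (-s*(j + (i + (2*k+5)/(2*(2*k+3)))/N)^2) : ℝ) : ℂ)) := by
    intro i j
    rw [mul_sub, mul_one, ← pow_add, exp_pow_form, exp_pow_form, ee_real k _ t N i j hN0 rfl,
      ee_real2 k _ t N i j hN0 rfl, ← hs, ← hE, Real.exp_add, Real.exp_add]
    have h1 : ζ^(ee k (i+N*j)) = ζ^(ee k i) := pow_eq_pow_of_modEq (ee_period hN k i j) hz
    have h2 : ζ^(2*(i+N*j)+1) = ζ^(2*i+1) := by
      rw [show 2*(i+N*j)+1 = (2*i+1) + N*(2*j) by ring, pow_add, pow_mul, hz, one_pow, mul_one]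
    rw [pow_add, h1, h2]
    push_cast
    ring
  have hin : ∀ i, ∑' j : ℕ, (ζ * (Real.exp (-t) : ℂ))^(ee k (i+N*j)) *
      (1 - (ζ * (Real.exp (-t) : ℂ))^(2*(i+N*j)+1)) =
      ((Real.exp E : ℝ) : ℂ) * ζ^(ee k i) * ((SS ((i + (2*k+1)/(2*(2*k+3)))/N) s : ℂ)
        - ζ^(2*i+1) * (SS ((i + (2*k+5)/(2*(2*k+3)))/N) s : ℂ)) := by
    intro i
    simp only [hterm]
    have s1 : Summable (fun j : ℕ => ((Real.exp (-s*(j + (i + (2*k+1)/(2*(2*k+3)))/N)^2) : ℝ) : ℂ)) :=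
      Complex.summable_ofReal.mpr (SS_summable hs0 (by positivity))
    have s2 : Summable (fun j : ℕ => ((Real.exp (-s*(j + (i + (2*k+5)/(2*(2*k+3)))/N)^2) : ℝ) : ℂ)) :=
      Complex.summable_ofReal.mpr (SS_summable hs0 (by positivity))
    rw [tsum_mul_left, s1.tsum_sub (s2.mul_left _), tsum_mul_left]
    unfold SS
    rw [Complex.ofReal_tsum, Complex.ofReal_tsum]
  rw [Finset.sum_congr rfl (fun i _ => hin i), Finset.mul_sum]
  have hc := c_sum hN hz k
  rw [← sub_eq_zero, ← Finset.sum_sub_distrib]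
  rw [← mul_zero ((Real.exp E : ℂ) * (SS 0 s : ℂ)), ← hc, Finset.mul_sum]
  refine Finset.sum_congr rfl fun i _ => ?_
  push_cast
  ring

lemma F_lim {ζ : ℂ} {N : ℕ} (hN : Odd N) (hz : IsPrimitiveRoot ζ N) (k : ℕ) :
    Filter.Tendsto (fun t : ℝ => P (k+2) (ζ * (Real.exp (-t) : ℂ))) (nhdsWithin 0 (Set.Ioi 0))
      (nhds (2/(2*k+3) * Z (k+2) N ζ)) := by
  have hN0 : 0 < N := hN.pos
  have hN' : (N:ℂ) ≠ 0 := by exact_mod_cast hN0.ne'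
  have hk : (2*(k:ℂ)+3) ≠ 0 := by exact_mod_cast (by omega : 2*k+3 ≠ 0)
  have hnorm : ‖ζ‖ = 1 := hz.norm'_eq_one hN0.ne'
  have hs : Filter.Tendsto (fun t : ℝ => t*((2*k+3)/2)*N^2) (nhdsWithin 0 (Set.Ioi 0))
      (nhdsWithin 0 (Set.Ioi 0)) := by
    apply tendsto_nhdsWithin_of_tendsto_nhds_of_eventually_within
    · apply tendsto_nhdsWithin_of_tendsto_nhds
      have : Continuous (fun t : ℝ => t*((2*k+3)/2)*(N:ℝ)^2) := by fun_prop
      simpa using this.tendsto 0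
    · filter_upwards [self_mem_nhdsWithin] with t ht
      have ht : 0 < t := ht
      rw [Set.mem_Ioi]
      positivity
  have hE : Filter.Tendsto (fun t : ℝ => ((Real.exp (t*((2*k+3)/2*((2*k+1)/(2*(2*k+3)))^2)) : ℝ) : ℂ))
      (nhdsWithin 0 (Set.Ioi 0)) (nhds 1) := by
    apply tendsto_nhdsWithin_of_tendsto_nhds
    have : Continuous (fun t : ℝ => ((Real.exp (t*((2*k+3)/2*((2*k+1)/(2*(2*k+3)))^2)) : ℝ) : ℂ)) := by
      fun_prop
    simpa using this.tendsto 0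
  have hS : ∀ b : ℝ, 0 ≤ b → Filter.Tendsto (fun t : ℝ => ((SS 0 (t*((2*k+3)/2)*N^2)
      - SS b (t*((2*k+3)/2)*N^2) : ℝ) : ℂ)) (nhdsWithin 0 (Set.Ioi 0)) (nhds (b:ℂ)) := fun b hb =>
    (Complex.continuous_ofReal.tendsto b).comp ((SS_lim hb).comp hs)
  have hsum := hE.mul (tendsto_finsetSum (Finset.range N) fun i _ =>
    ((hS ((i + (2*k+1)/(2*(2*k+3)))/N) (by positivity)).neg.add
      ((hS ((i + (2*k+5)/(2*(2*k+3)))/N) (by positivity)).const_mul (ζ^(2*i+1)))).const_mul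
        (ζ^(ee k i)))
  have hval : 2/(2*k+3) * Z (k+2) N ζ = 1 * ∑ i ∈ Finset.range N, ζ^(ee k i) *
      (-(((i + (2*k+1)/(2*(2*k+3)))/N : ℝ) : ℂ)
        + ζ^(2*i+1) * (((i + (2*k+5)/(2*(2*k+3)))/N : ℝ) : ℂ)) := by
    have hf := Z_final hN hz k
    have hc := c_sum hN hz.pow_eq_one k
    have e : ∑ i ∈ Finset.range N, ζ^(ee k i) *
      (-(((i + (2*k+1)/(2*(2*k+3)))/N : ℝ) : ℂ)
        + ζ^(2*i+1) * (((i + (2*k+5)/(2*(2*k+3)))/N : ℝ) : ℂ)) =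
      -(1/N) * ∑ r ∈ Finset.range N, ζ^(ee k r) * (1 - ζ^(2*r+1)) * r
      + (2/(2*k+3)/N) * ∑ r ∈ Finset.range N, ζ^(ee k r) * ζ^(2*r+1)
      - ((2*k+1)/(2*(2*k+3)))/N * ∑ r ∈ Finset.range N, ζ^(ee k r) * (1 - ζ^(2*r+1)) := by
      rw [Finset.mul_sum, Finset.mul_sum, Finset.mul_sum, ← Finset.sum_add_distrib,
        ← Finset.sum_sub_distrib]
      refine Finset.sum_congr rfl fun i _ => ?_
      push_cast
      field_simp
      ring
    rw [e, hc]
    have : Z (k+2) N ζ = -(1/N) * (-(N:ℂ) * Z (k+2) N ζ) := by field_simp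
    rw [this, hf]
    field_simp
    ring
  rw [hval]
  refine hsum.congr' ?_
  filter_upwards [self_mem_nhdsWithin] with t ht
  have ht : 0 < t := ht
  have hq : ‖ζ * (Real.exp (-t) : ℂ)‖ < 1 := by
    rw [norm_mul, hnorm, one_mul, Complex.norm_real, Real.norm_eq_abs, Real.abs_exp]
    rw [← Real.exp_zero]; exact Real.exp_lt_exp.mpr (by linarith)
  rw [P_eq hq, F_form hN hz.pow_eq_one k ht hq]

theorem stmt6 (m : ℕ) (hm : 2 ≤ m) (M : ℤ) (N : ℕ) (hN : 0 < N) (hNodd : Odd N)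
    (hMN : IsCoprime M (N : ℤ)) :
    Filter.Tendsto
      (fun t : ℝ => ((2 * (m : ℂ) - 1) / 2) *
        Complex.exp ((2 * Real.pi * Complex.I * M / N - t) *
          ((2 * (m : ℂ) - 3) ^ 2 / (8 * (2 * m - 1)))) *
        P m (Complex.exp (2 * Real.pi * Complex.I * M / N - t)))
      (nhdsWithin 0 (Set.Ioi 0))
      (nhds (Complex.exp (2 * Real.pi * Complex.I * M * ((2 * (m : ℂ) - 3) ^ 2) /
          (8 * (2 * m - 1) * N)) *
        Z m N (Complex.exp (2 * Real.pi * Complex.I * M / N)))) := by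
  obtain ⟨k, rfl⟩ : ∃ k, m = k+2 := ⟨m-2, by omega⟩
  have hz : IsPrimitiveRoot (Complex.exp (2 * Real.pi * Complex.I * M / N)) N := by
    have := Complex.isPrimitiveRoot_exp_of_isCoprime M N hN.ne' hMN
    rwa [← mul_div_assoc] at this
  have hk : (2*(k:ℂ)+3) ≠ 0 := by exact_mod_cast (by omega : 2*k+3 ≠ 0)
  have hN' : (N:ℂ) ≠ 0 := by exact_mod_cast hN.ne'
  have hk2 : (2*((k+2:ℕ):ℂ) - 1) = 2*k+3 := by push_cast; ring
  have h1 := F_lim hNodd hz k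
  have h2 : Filter.Tendsto (fun t : ℝ => ((2 * ((k+2:ℕ) : ℂ) - 1) / 2) *
        Complex.exp ((2 * Real.pi * Complex.I * M / N - t) *
          ((2 * ((k+2:ℕ) : ℂ) - 3) ^ 2 / (8 * (2 * (k+2:ℕ) - 1))))) (nhdsWithin 0 (Set.Ioi 0))
      (nhds (((2 * ((k+2:ℕ) : ℂ) - 1) / 2) *
        Complex.exp ((2 * Real.pi * Complex.I * M / N - (0:ℝ)) *
          ((2 * ((k+2:ℕ) : ℂ) - 3) ^ 2 / (8 * (2 * (k+2:ℕ) - 1)))))) := by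
    apply tendsto_nhdsWithin_of_tendsto_nhds
    apply Continuous.tendsto (f := fun t : ℝ => ((2 * ((k+2:ℕ) : ℂ) - 1) / 2) *
        Complex.exp ((2 * Real.pi * Complex.I * M / N - t) *
          ((2 * ((k+2:ℕ) : ℂ) - 3) ^ 2 / (8 * (2 * (k+2:ℕ) - 1)))))
    fun_prop
  convert h2.mul h1 using 2
  · rename_i t
    rw [show Complex.exp (2 * Real.pi * Complex.I * M / N - t) =
      Complex.exp (2 * Real.pi * Complex.I * M / N) * ((Real.exp (-t) : ℝ) : ℂ) by
        rw [Complex.ofReal_exp, Complex.ofReal_neg, ← Complex.exp_add, sub_eq_add_neg]]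
  · rw [hk2, Complex.ofReal_zero, sub_zero]
    have e : 2 * Real.pi * Complex.I * M * (2 * ((k+2:ℕ):ℂ) - 3)^2 / (8 * (2*k+3) * N)
      = 2 * Real.pi * Complex.I * M / N * ((2 * ((k+2:ℕ):ℂ) - 3)^2 / (8 * (2*k+3))) := by
      field_simp
    rw [e]
    field_simp
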